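/- arXiv:1309.5523 — 14 statements merged into one kernel-verified Lean document; each statement's English description precedes it below -/
import Mathlib

section
/- Let α > 0 and β, h, μ, k, ω ∈ ℝ and θ ∈ (0, π). The function m : ℝ × ℝ → ℝ³ defined by m(x,t) = (sin θ cos(kx − ωt), sin θ sin(kx − ωt), cos θ) satisfies the LLGS equation ∂ₜm = m × (α ∂ₜm − ∂ₓₓm + (μ m₃ − h) ê₃ + β m × ê₃) at every (x,t) ∈ ℝ × ℝ if and only if ω = −β/α and (μ − k²) cos θ = h − β/α. -/
/-! Write `φ = kx − ωt`, `e = (cos φ, sin φ, 0)` and `f = (sin φ, −cos φ, 0)`, so that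
`m = sin θ e + cos θ ê₃`, `∂ₜm = ω sin θ f`, `∂ₓₓm = −k² sin θ e` and `m × ê₃ = sin θ f`.
Since `e × f = −ê₃`, `ê₃ × f = e` and `e × ê₃ = f`, the LLGS equation becomes
`ω sin θ f = sin θ ((μ − k²) cos θ − h) f + (αω + β) sin θ cos θ e − (αω + β) sin² θ ê₃`.
As `sin θ ≠ 0`, this holds iff `αω + β = 0` (the `ê₃`-component) and
`(μ − k²) cos θ − h = ω` (the `f`-component). For necessity the single point `x = t = 0` suffices. -/

/-- The wavetrain ansatz with polar angle `θ`, wavenumber `k` and frequency `ω`: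
`m(x,t) = (sin θ cos(kx − ωt), sin θ sin(kx − ωt), cos θ)` as a vector in `ℝ³`. -/
noncomputable def wtProfile (θ k ω : ℝ) (x t : ℝ) : Fin 3 → ℝ :=
  ![Real.sin θ * Real.cos (k * x - ω * t),
    Real.sin θ * Real.sin (k * x - ω * t),
    Real.cos θ]

/-- The unit vector `ê₃`. -/
def e3 : Fin 3 → ℝ := ![0, 0, 1]

lemma deriv_wtProfile_time (θ k ω x t : ℝ) :
    deriv (fun s => wtProfile θ k ω x s) t =
      ![ω * Real.sin θ * Real.sin (k * x - ω * t),
        -(ω * Real.sin θ * Real.cos (k * x - ω * t)), 0] := by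
  have hp : HasDerivAt (fun s => k * x - ω * s) (-ω) t := by
    simpa using ((hasDerivAt_id t).const_mul ω).const_sub (k * x)
  refine HasDerivAt.deriv (hasDerivAt_pi.2 fun i => ?_)
  fin_cases i
  · exact (hp.cos.const_mul (Real.sin θ)).congr_deriv (by simp; ring)
  · exact (hp.sin.const_mul (Real.sin θ)).congr_deriv (by simp; ring)
  · exact hasDerivAt_const t (Real.cos θ)

lemma deriv_wtProfile_space (θ k ω x t : ℝ) :
    deriv (fun y => wtProfile θ k ω y t) x =
      ![-(k * Real.sin θ * Real.sin (k * x - ω * t)),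
        k * Real.sin θ * Real.cos (k * x - ω * t), 0] := by
  have hp : HasDerivAt (fun y => k * y - ω * t) k x := by
    simpa using ((hasDerivAt_id x).const_mul k).sub_const (ω * t)
  refine HasDerivAt.deriv (hasDerivAt_pi.2 fun i => ?_)
  fin_cases i
  · exact (hp.cos.const_mul (Real.sin θ)).congr_deriv (by simp; ring)
  · exact (hp.sin.const_mul (Real.sin θ)).congr_deriv (by simp; ring)
  · exact hasDerivAt_const x (Real.cos θ)

lemma deriv_deriv_wtProfile_space (θ k ω x t : ℝ) :
    deriv (fun y => deriv (fun y' => wtProfile θ k ω y' t) y) x =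
      ![-(k ^ 2 * Real.sin θ * Real.cos (k * x - ω * t)),
        -(k ^ 2 * Real.sin θ * Real.sin (k * x - ω * t)), 0] := by
  simp only [deriv_wtProfile_space]
  have hp : HasDerivAt (fun y => k * y - ω * t) k x := by
    simpa using ((hasDerivAt_id x).const_mul k).sub_const (ω * t)
  refine HasDerivAt.deriv (hasDerivAt_pi.2 fun i => ?_)
  fin_cases i
  · exact (hp.sin.const_mul (k * Real.sin θ)).neg.congr_deriv (by simp; ring)
  · exact (hp.cos.const_mul (k * Real.sin θ)).congr_deriv (by simp; ring)
  · exact hasDerivAt_const x (0 : ℝ)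

theorem stmt1 (α β h μ k ω θ : ℝ) (hα : 0 < α) (hθ : θ ∈ Set.Ioo 0 Real.pi) :
    (∀ x t : ℝ,
        deriv (fun s => wtProfile θ k ω x s) t =
          crossProduct (wtProfile θ k ω x t)
            (α • deriv (fun s => wtProfile θ k ω x s) t
              - deriv (fun y => deriv (fun y' => wtProfile θ k ω y' t) y) x
              + (μ * wtProfile θ k ω x t 2 - h) • e3
              + β • crossProduct (wtProfile θ k ω x t) e3))
      ↔ (ω = -(β / α) ∧ (μ - k ^ 2) * Real.cos θ = h - β / α) := by
  have hs : Real.sin θ ≠ 0 := (Real.sin_pos_of_mem_Ioo hθ).ne'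
  simp only [deriv_wtProfile_time, deriv_deriv_wtProfile_space]
  constructor
  · intro H
    have H0 := H 0 0
    have H1 := congrFun H0 1
    have H2 := congrFun H0 2
    simp [wtProfile, e3, cross_apply] at H1 H2
    have hω : α * ω + β = 0 := by
      have : Real.sin θ * Real.sin θ * (α * ω + β) = 0 := by grind
      simpa [hs] using this
    have hω' : ω = -(β / α) := by
      field_simp
      linarith
    refine ⟨hω', ?_⟩
    have : (μ - k ^ 2) * Real.cos θ - h = ω := by
      apply mul_left_cancel₀ hs
      linarith
    linarith
  · rintro ⟨h1, h2⟩ x t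
    have hω : β = -(α * ω) := by
      rw [h1]
      field_simp
    have hh : h = (μ - k ^ 2) * Real.cos θ - ω := by linarith
    subst hω hh
    ext i
    fin_cases i <;> simp [wtProfile, e3, cross_apply] <;> ring
end

section
/- Let α > 0 and β, h, μ, k ∈ ℝ with k² ≠ μ. There exists θ ∈ (0, π) with (μ − k²) cos θ = h − β/α if and only if |μ − k²| > |h − β/α|, and in that case θ is unique; moreover (given k² ≠ μ) this condition holds if and only if k² < μ − |h − β/α| or k² > μ + |h − β/α|. In particular: if μ > |h − β/α| (supercritical anisotropy), nontrivial wavetrains exist exactly for wavenumbers with |k| ∈ [0, √(μ − |h − β/α|)) ∪ (√(μ + |h − β/α|), ∞); if |μ| < |h − β/α| (subcritical anisotropy), exactly for |k| > √(μ + |h − β/α|); and if −μ > |h − β/α| (subsubcritical anisotropy), for every k ∈ ℝ. -/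
/-!
Write `a = μ - k²` and `c = h - β / α`. Since `cos` maps `(0, π)` bijectively onto `(-1, 1)`, the
equation `a cos θ = c` with `a ≠ 0` has a solution in `(0, π)` iff `|c / a| < 1`, and at most one.
Splitting `|c| < |a|` on the sign of `a` gives the two ranges of `k²`, and taking square roots gives
the ranges of `|k|` in the three anisotropy regimes.
-/

lemma exists_mul_cos_eq_iff {a : ℝ} (ha : a ≠ 0) (c : ℝ) :
    (∃ θ ∈ Set.Ioo 0 Real.pi, a * Real.cos θ = c) ↔ |c| < |a| := by
  constructor
  · rintro ⟨θ, ⟨h0, hpi⟩, rfl⟩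
    have hsin := Real.sin_pos_of_pos_of_lt_pi h0 hpi
    have hcos : |Real.cos θ| < 1 := by
      rw [← sq_lt_one_iff_abs_lt_one]
      nlinarith [Real.sin_sq_add_cos_sq θ]
    rw [abs_mul]
    exact mul_lt_of_lt_one_right (abs_pos.mpr ha) hcos
  · intro hlt
    have hq : |c / a| < 1 := by
      rw [abs_div, div_lt_one (abs_pos.mpr ha)]
      exact hlt
    obtain ⟨hl, hu⟩ := abs_lt.mp hq
    refine ⟨Real.arccos (c / a), ⟨Real.arccos_pos.mpr hu, ?_⟩, ?_⟩
    · refine lt_of_le_of_ne (Real.arccos_le_pi _) fun he => ?_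
      exact absurd (Real.arccos_eq_pi.mp he) (not_le.mpr hl)
    · rw [Real.cos_arccos hl.le hu.le, mul_div_cancel₀ _ ha]

theorem stmt2 (α β h μ k : ℝ) (hα : 0 < α) (hk : k ^ 2 ≠ μ) :
    -- existence of a wavetrain polar angle `θ ∈ (0,π)` iff `|μ − k²| > |h − β/α|`
    ((∃ θ ∈ Set.Ioo 0 Real.pi, (μ - k ^ 2) * Real.cos θ = h - β / α) ↔
        |h - β / α| < |μ - k ^ 2|) ∧
    -- uniqueness of such `θ`
    (∀ θ₁ ∈ Set.Ioo 0 Real.pi, ∀ θ₂ ∈ Set.Ioo 0 Real.pi,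
        (μ - k ^ 2) * Real.cos θ₁ = h - β / α →
        (μ - k ^ 2) * Real.cos θ₂ = h - β / α → θ₁ = θ₂) ∧
    -- reformulation of the existence condition
    (|h - β / α| < |μ - k ^ 2| ↔
        (k ^ 2 < μ - |h - β / α| ∨ μ + |h - β / α| < k ^ 2)) ∧
    -- supercritical anisotropy
    (|h - β / α| < μ →
      ((∃ θ ∈ Set.Ioo 0 Real.pi, (μ - k ^ 2) * Real.cos θ = h - β / α) ↔
        (|k| < Real.sqrt (μ - |h - β / α|) ∨ Real.sqrt (μ + |h - β / α|) < |k|))) ∧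
    -- subcritical anisotropy
    (|μ| < |h - β / α| →
      ((∃ θ ∈ Set.Ioo 0 Real.pi, (μ - k ^ 2) * Real.cos θ = h - β / α) ↔
        Real.sqrt (μ + |h - β / α|) < |k|)) ∧
    -- subsubcritical anisotropy: wavetrains for every wavenumber
    (|h - β / α| < -μ →
      ∃ θ ∈ Set.Ioo 0 Real.pi, (μ - k ^ 2) * Real.cos θ = h - β / α) := by
  have ha : μ - k ^ 2 ≠ 0 := sub_ne_zero.mpr hk.symm
  generalize h - β / α = c
  have hex := exists_mul_cos_eq_iff ha c
  have href : |c| < |μ - k ^ 2| ↔ (k ^ 2 < μ - |c| ∨ μ + |c| < k ^ 2) := by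
    rw [lt_abs]
    constructor <;> rintro (h1 | h1)
    · left; linarith
    · right; linarith
    · left; linarith
    · right; linarith
  have hc := abs_nonneg c
  refine ⟨hex, ?_, href, fun hμ => ?_, fun hμ => ?_, fun hμ => ?_⟩
  · intro θ₁ h1 θ₂ h2 e1 e2
    exact Real.injOn_cos (Set.Ioo_subset_Icc_self h1) (Set.Ioo_subset_Icc_self h2)
      (mul_left_cancel₀ ha (e1.trans e2.symm))
  · rw [hex, href, Real.lt_sqrt (abs_nonneg k),
      Real.sqrt_lt (by linarith) (abs_nonneg k), sq_abs]
  · obtain ⟨hl, hu⟩ := abs_lt.mp hμ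
    rw [hex, href, Real.sqrt_lt (by linarith) (abs_nonneg k), sq_abs]
    -- The lower range of wavenumbers is empty because `μ - |c| < 0 ≤ k²`.
    exact or_iff_right (by nlinarith [sq_nonneg k])
  · rw [hex, href]
    right
    linarith [sq_nonneg k]
end

section
/- Let α > 0, β, h, μ ∈ ℝ, set δ = |h − β/α|, and define the wavetrain parameter set W = {(k, m₃) ∈ ℝ × (−1, 1) : m₃ (μ − k²) = h − β/α}. Then: (a) if μ > δ > 0 (supercritical anisotropy), W has exactly three connected components, namely the bounded component {(k,m₃) ∈ W : k² < μ − δ}, which contains a point with k = 0, and the two unbounded components {(k,m₃) ∈ W : k > √(μ + δ)} and {(k,m₃) ∈ W : k < −√(μ + δ)}, on each of which k has constant sign; (b) if |μ| < δ (subcritical anisotropy), W has exactly two connected components, {(k,m₃) ∈ W : k > √(μ + δ)} and {(k,m₃) ∈ W : k < −√(μ + δ)}, on each of which k has constant sign and |k| is unbounded; (c) if −μ > δ (subsubcritical anisotropy), W equals the graph {(k, (h − β/α)/(μ − k²)) : k ∈ ℝ} of a function defined for every wavenumber k ∈ ℝ. -/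
/-!
Write `c = h - β / α`. Over a wavenumber `k` with `μ ≠ k ^ 2` the only candidate for `m₃` is
`c / (μ - k ^ 2)`, and it lies in `(-1, 1)` exactly when `|c| < |μ - k ^ 2|`. Hence the part of `W`
over an interval of wavenumbers satisfying this inequality is the graph of a continuous function,
so it is connected (`wavetrain_graph_isPreconnected`). Conversely, for `c ≠ 0` every point of `W`
satisfies `|c| < |μ - k ^ 2|` (`abs_lt_of_mem_wavetrain`), so the wavenumbers `k ^ 2 = μ ± |c|` are
avoided, and cutting along them separates `W` into relatively open pieces. Each piece is then a
connected component (`connectedComponentIn_eq_inter_of_separated`).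
-/

/-- A preconnected piece of `W` cut out by one of two disjoint open sets covering `W` is the
component of each of its points. -/
lemma connectedComponentIn_eq_inter_of_separated {X : Type*} [TopologicalSpace X]
    {W U V : Set X} (hU : IsOpen U) (hV : IsOpen V)
    (hUV : Disjoint U V) (hW : W ⊆ U ∪ V) (hpre : IsPreconnected (W ∩ U))
    {p : X} (hp : p ∈ W ∩ U) : connectedComponentIn W p = W ∩ U := by
  apply Set.Subset.antisymm
  · refine Set.subset_inter (connectedComponentIn_subset W p) ?_
    exact isPreconnected_connectedComponentIn.subset_left_of_subset_union hU hV hUV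
      ((connectedComponentIn_subset W p).trans hW)
      ⟨p, mem_connectedComponentIn hp.1, hp.2⟩
  · exact hpre.subset_connectedComponentIn hp Set.inter_subset_left

lemma abs_lt_of_mem_wavetrain {c μ k y : ℝ} (hc : 0 < |c|) (hy : y ∈ Set.Ioo (-1 : ℝ) 1)
    (h : y * (μ - k ^ 2) = c) : |c| < |μ - k ^ 2| := by
  have hy' : |y| < 1 := abs_lt.2 hy
  have hne : 0 < |μ - k ^ 2| := by
    rw [abs_pos]
    rintro h0
    rw [h0, mul_zero] at h
    simp [← h] at hc
  rw [← h, abs_mul]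
  nlinarith

lemma mem_wavetrain_iff {c μ k y : ℝ} (hk : |c| < |μ - k ^ 2|) :
    (y ∈ Set.Ioo (-1 : ℝ) 1 ∧ y * (μ - k ^ 2) = c) ↔ y = c / (μ - k ^ 2) := by
  have hpos : 0 < |μ - k ^ 2| := (abs_nonneg c).trans_lt hk
  have hne : μ - k ^ 2 ≠ 0 := abs_pos.1 hpos
  rw [eq_div_iff hne]
  refine ⟨fun h => h.2, fun h => ⟨?_, h⟩⟩
  rw [← h, abs_mul] at hk
  exact abs_lt.1 (by nlinarith)

lemma wavetrain_graph_isPreconnected {c μ : ℝ} {I : Set ℝ} (hI : IsPreconnected I)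
    (hk : ∀ k ∈ I, |c| < |μ - k ^ 2|) :
    IsPreconnected ({p : ℝ × ℝ | p.2 ∈ Set.Ioo (-1 : ℝ) 1 ∧ p.2 * (μ - p.1 ^ 2) = c} ∩
      {p | p.1 ∈ I}) := by
  have himage : ({p : ℝ × ℝ | p.2 ∈ Set.Ioo (-1 : ℝ) 1 ∧ p.2 * (μ - p.1 ^ 2) = c} ∩
      {p | p.1 ∈ I}) = (fun k : ℝ => (k, c / (μ - k ^ 2))) '' I := by
    ext ⟨k, y⟩
    constructor
    · rintro ⟨hW, hkI⟩
      exact ⟨k, hkI, Prod.ext rfl ((mem_wavetrain_iff (hk k hkI)).1 hW).symm⟩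
    · rintro ⟨k', hkI, heq⟩
      obtain ⟨rfl, rfl⟩ := Prod.mk.inj heq
      exact ⟨(mem_wavetrain_iff (hk _ hkI)).2 rfl, hkI⟩
  rw [himage]
  refine hI.image _ (continuousOn_id.prodMk (continuousOn_const.div (by fun_prop) ?_))
  intro k hkI
  exact abs_pos.1 ((abs_nonneg c).trans_lt (hk k hkI))

/-- The unbounded component of positive wavenumbers. -/
lemma wavetrain_component_right {c μ : ℝ} (hc : 0 < |c|) {p : ℝ × ℝ}
    (hp : p.2 ∈ Set.Ioo (-1 : ℝ) 1 ∧ p.2 * (μ - p.1 ^ 2) = c)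
    (hμ : 0 < μ + |c|) (hpk : Real.sqrt (μ + |c|) < p.1) :
    connectedComponentIn {p : ℝ × ℝ | p.2 ∈ Set.Ioo (-1 : ℝ) 1 ∧ p.2 * (μ - p.1 ^ 2) = c} p =
      {p : ℝ × ℝ | p.2 ∈ Set.Ioo (-1 : ℝ) 1 ∧ p.2 * (μ - p.1 ^ 2) = c} ∩
        {p | p.1 ∈ Set.Ioi (Real.sqrt (μ + |c|))} := by
  have hs := Real.sq_sqrt hμ.le
  refine connectedComponentIn_eq_inter_of_separated
    (U := {p : ℝ × ℝ | p.1 ∈ Set.Ioi (Real.sqrt (μ + |c|))})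
    (V := {p : ℝ × ℝ | p.1 ∈ Set.Iio (Real.sqrt (μ + |c|))})
    (isOpen_Ioi.preimage continuous_fst) (isOpen_Iio.preimage continuous_fst) ?_ ?_
    (wavetrain_graph_isPreconnected isPreconnected_Ioi ?_) ⟨hp, hpk⟩
  · exact Set.disjoint_left.2 fun q (h1 : Real.sqrt (μ + |c|) < q.1)
      (h2 : q.1 < Real.sqrt (μ + |c|)) => lt_asymm h1 h2
  · rintro ⟨k, y⟩ ⟨hy, hq⟩
    have hlt := abs_lt_of_mem_wavetrain hc hy hq
    rcases lt_trichotomy k (Real.sqrt (μ + |c|)) with h | h | h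
    · exact Or.inr h
    · simp [h, hs] at hlt
    · exact Or.inl h
  · intro k hk
    rw [Set.mem_Ioi, Real.sqrt_lt' ((Real.sqrt_nonneg _).trans_lt hk)] at hk
    exact lt_abs.2 (Or.inr (by linarith))

/-- The unbounded component of negative wavenumbers. -/
lemma wavetrain_component_left {c μ : ℝ} (hc : 0 < |c|) {p : ℝ × ℝ}
    (hp : p.2 ∈ Set.Ioo (-1 : ℝ) 1 ∧ p.2 * (μ - p.1 ^ 2) = c)
    (hμ : 0 < μ + |c|) (hpk : p.1 < -Real.sqrt (μ + |c|)) :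
    connectedComponentIn {p : ℝ × ℝ | p.2 ∈ Set.Ioo (-1 : ℝ) 1 ∧ p.2 * (μ - p.1 ^ 2) = c} p =
      {p : ℝ × ℝ | p.2 ∈ Set.Ioo (-1 : ℝ) 1 ∧ p.2 * (μ - p.1 ^ 2) = c} ∩
        {p | p.1 ∈ Set.Iio (-Real.sqrt (μ + |c|))} := by
  have hs := Real.sq_sqrt hμ.le
  refine connectedComponentIn_eq_inter_of_separated
    (U := {p : ℝ × ℝ | p.1 ∈ Set.Iio (-Real.sqrt (μ + |c|))})
    (V := {p : ℝ × ℝ | p.1 ∈ Set.Ioi (-Real.sqrt (μ + |c|))})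
    (isOpen_Iio.preimage continuous_fst) (isOpen_Ioi.preimage continuous_fst) ?_ ?_
    (wavetrain_graph_isPreconnected isPreconnected_Iio ?_) ⟨hp, hpk⟩
  · exact Set.disjoint_left.2 fun q (h1 : q.1 < -Real.sqrt (μ + |c|))
      (h2 : -Real.sqrt (μ + |c|) < q.1) => lt_asymm h1 h2
  · rintro ⟨k, y⟩ ⟨hy, hq⟩
    have hlt := abs_lt_of_mem_wavetrain hc hy hq
    rcases lt_trichotomy k (-Real.sqrt (μ + |c|)) with h | h | h
    · exact Or.inl h
    · simp [h, hs] at hlt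
    · exact Or.inr h
  · intro k hk
    have hk' : Real.sqrt (μ + |c|) < -k := lt_neg.1 hk
    rw [Real.sqrt_lt' ((Real.sqrt_nonneg _).trans_lt hk'), neg_sq] at hk'
    exact lt_abs.2 (Or.inr (by linarith))

/-- The bounded component, which contains the wavenumber `0` in the supercritical case. -/
lemma wavetrain_component_middle {c μ : ℝ} (hc : 0 < |c|) {p : ℝ × ℝ}
    (hp : p.2 ∈ Set.Ioo (-1 : ℝ) 1 ∧ p.2 * (μ - p.1 ^ 2) = c)
    (hpk : p.1 ^ 2 < μ - |c|) :
    connectedComponentIn {p : ℝ × ℝ | p.2 ∈ Set.Ioo (-1 : ℝ) 1 ∧ p.2 * (μ - p.1 ^ 2) = c} p =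
      {p : ℝ × ℝ | p.2 ∈ Set.Ioo (-1 : ℝ) 1 ∧ p.2 * (μ - p.1 ^ 2) = c} ∩
        {p | p.1 ∈ {k : ℝ | k ^ 2 < μ - |c|}} := by
  have hI : {k : ℝ | k ^ 2 < μ - |c|} =
      Set.Ioo (-Real.sqrt (μ - |c|)) (Real.sqrt (μ - |c|)) := by
    ext k
    exact Real.sq_lt
  refine connectedComponentIn_eq_inter_of_separated
    (U := {p : ℝ × ℝ | p.1 ∈ {k : ℝ | k ^ 2 < μ - |c|}})
    (V := {p : ℝ × ℝ | μ - |c| < p.1 ^ 2})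
    ((isOpen_lt (by fun_prop) continuous_const).preimage continuous_fst)
    (isOpen_lt continuous_const (by fun_prop)) ?_ ?_
    (wavetrain_graph_isPreconnected (hI ▸ isPreconnected_Ioo) ?_) ⟨hp, hpk⟩
  · exact Set.disjoint_left.2 fun q (h1 : q.1 ^ 2 < μ - |c|)
      (h2 : μ - |c| < q.1 ^ 2) => lt_asymm h1 h2
  · rintro ⟨k, y⟩ ⟨hy, hq⟩
    have hlt := abs_lt_of_mem_wavetrain hc hy hq
    rcases lt_trichotomy (k ^ 2) (μ - |c|) with h | h | h
    · exact Or.inl h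
    · simp [h] at hlt
    · exact Or.inr h
  · intro k hk
    have hk' : k ^ 2 < μ - |c| := hk
    exact lt_abs.2 (Or.inl (by linarith))

lemma sqrt_lt_or_lt_neg_sqrt {a k : ℝ} (ha : 0 < a) (hk : a < k ^ 2) :
    Real.sqrt a < k ∨ k < -Real.sqrt a := by
  have hlt : Real.sqrt a < |k| := by
    rw [← Real.sqrt_sq_eq_abs]
    exact Real.sqrt_lt_sqrt ha.le hk
  exact (lt_abs.1 hlt).imp_right lt_neg.1

/-- Wavetrains exist for every wavenumber satisfying `μ + |c| < k ^ 2`. -/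
lemma exists_wavetrain {c μ k : ℝ} (hk : μ + |c| < k ^ 2) :
    ∃ y : ℝ, y ∈ Set.Ioo (-1 : ℝ) 1 ∧ y * (μ - k ^ 2) = c :=
  ⟨_, (mem_wavetrain_iff (lt_abs.2 (Or.inr (by linarith)))).2 rfl⟩

/-- There are wavetrains of arbitrarily large positive wavenumber. -/
lemma exists_wavetrain_right (c μ M : ℝ) :
    ∃ k y : ℝ, (y ∈ Set.Ioo (-1 : ℝ) 1 ∧ y * (μ - k ^ 2) = c) ∧
      Real.sqrt (μ + |c|) < k ∧ M < k := by
  have hk : Real.sqrt (μ + |c|) < max (Real.sqrt (μ + |c|)) M + 1 :=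
    (le_max_left _ _).trans_lt (lt_add_one _)
  obtain ⟨y, hy⟩ := exists_wavetrain (c := c) (μ := μ)
    ((Real.sqrt_lt' ((Real.sqrt_nonneg _).trans_lt hk)).1 hk)
  exact ⟨_, y, hy, hk, (le_max_right _ _).trans_lt (lt_add_one _)⟩

theorem stmt3 (α β h μ : ℝ) (hα : 0 < α) :
    ∀ W A B C : Set (ℝ × ℝ),
      W = {p : ℝ × ℝ | p.2 ∈ Set.Ioo (-1 : ℝ) 1 ∧ p.2 * (μ - p.1 ^ 2) = h - β / α} →
      A = {p ∈ W | p.1 ^ 2 < μ - |h - β / α|} →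
      B = {p ∈ W | Real.sqrt (μ + |h - β / α|) < p.1} →
      C = {p ∈ W | p.1 < -Real.sqrt (μ + |h - β / α|)} →
      -- (a) supercritical anisotropy: exactly three connected components
      (((0 < |h - β / α| ∧ |h - β / α| < μ) →
          {S : Set (ℝ × ℝ) | ∃ p ∈ W, connectedComponentIn W p = S} = {A, B, C} ∧
          A ≠ B ∧ A ≠ C ∧ B ≠ C ∧
          (∃ y : ℝ, ((0 : ℝ), y) ∈ A) ∧
          (∀ p ∈ B, 0 < p.1) ∧ (∀ p ∈ C, p.1 < 0)) ∧
      -- (b) subcritical anisotropy: exactly two unbounded components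
      ((|μ| < |h - β / α|) →
          {S : Set (ℝ × ℝ) | ∃ p ∈ W, connectedComponentIn W p = S} = {B, C} ∧
          B ≠ C ∧
          (∀ p ∈ B, 0 < p.1) ∧ (∀ p ∈ C, p.1 < 0) ∧
          (∀ M : ℝ, ∃ p ∈ B, M < p.1) ∧ (∀ M : ℝ, ∃ p ∈ C, p.1 < -M)) ∧
      -- (c) subsubcritical anisotropy: `W` is a global graph over the wavenumber axis
      ((|h - β / α| < -μ) →
          W = {p : ℝ × ℝ | p.2 = (h - β / α) / (μ - p.1 ^ 2)})) := by
  rintro W A B C rfl rfl rfl rfl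
  generalize h - β / α = c
  have hBpos : ∀ k : ℝ, Real.sqrt (μ + |c|) < k → 0 < k :=
    fun k hk => (Real.sqrt_nonneg _).trans_lt hk
  have hCneg : ∀ k : ℝ, k < -Real.sqrt (μ + |c|) → k < 0 :=
    fun k hk => hk.trans_le (neg_nonpos.2 (Real.sqrt_nonneg _))
  refine ⟨?_, ?_, ?_⟩
  · rintro ⟨hc, hcμ⟩
    have hμ : 0 < μ + |c| := by linarith
    obtain ⟨k₁, y₁, hW₁, hk₁, -⟩ := exists_wavetrain_right c μ 0
    have hW₂ : y₁ ∈ Set.Ioo (-1 : ℝ) 1 ∧ y₁ * (μ - (-k₁) ^ 2) = c := by rwa [neg_sq]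
    have hk₂ : -k₁ < -Real.sqrt (μ + |c|) := neg_lt_neg hk₁
    have hW₀ : c / (μ - 0 ^ 2) ∈ Set.Ioo (-1 : ℝ) 1 ∧ c / (μ - 0 ^ 2) * (μ - 0 ^ 2) = c :=
      (mem_wavetrain_iff (lt_abs.2 (Or.inl (by linarith)))).2 rfl
    have hk₀ : (0 : ℝ) ^ 2 < μ - |c| := by linarith
    refine ⟨?_, ?_, ?_, ?_, ⟨_, hW₀, hk₀⟩, fun p hp => hBpos _ hp.2, fun p hp => hCneg _ hp.2⟩
    · ext S
      constructor
      · rintro ⟨⟨k, y⟩, hp, rfl⟩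
        rcases lt_abs.1 (abs_lt_of_mem_wavetrain hc hp.1 hp.2) with hk | hk
        · exact Or.inl (wavetrain_component_middle hc hp
            (show k ^ 2 < μ - |c| by dsimp only at hk; linarith))
        · rcases sqrt_lt_or_lt_neg_sqrt (k := k) hμ (by dsimp only at hk; linarith) with hk | hk
          · exact Or.inr (Or.inl (wavetrain_component_right hc hp hμ hk))
          · exact Or.inr (Or.inr (wavetrain_component_left hc hp hμ hk))
      · rintro (rfl | rfl | rfl)
        · exact ⟨(0, _), hW₀, wavetrain_component_middle hc hW₀ hk₀⟩
        · exact ⟨(k₁, y₁), hW₁, wavetrain_component_right hc hW₁ hμ hk₁⟩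
        · exact ⟨(-k₁, y₁), hW₂, wavetrain_component_left hc hW₂ hμ hk₂⟩
    · intro heq
      exact lt_irrefl _ (hBpos 0 (heq.subset ⟨hW₀, hk₀⟩ : ((0 : ℝ), c / (μ - 0 ^ 2)) ∈ _).2)
    · intro heq
      exact lt_irrefl _ (hCneg 0 (heq.subset ⟨hW₀, hk₀⟩ : ((0 : ℝ), c / (μ - 0 ^ 2)) ∈ _).2)
    · intro heq
      exact lt_asymm (hBpos _ hk₁) (hCneg _ (heq.subset ⟨hW₁, hk₁⟩ : (k₁, y₁) ∈ _).2)
  · intro hμc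
    have hc : 0 < |c| := (abs_nonneg μ).trans_lt hμc
    obtain ⟨hlo, hhi⟩ := abs_lt.1 hμc
    have hμ : 0 < μ + |c| := by linarith
    obtain ⟨k₁, y₁, hW₁, hk₁, -⟩ := exists_wavetrain_right c μ 0
    have hW₂ : y₁ ∈ Set.Ioo (-1 : ℝ) 1 ∧ y₁ * (μ - (-k₁) ^ 2) = c := by rwa [neg_sq]
    have hk₂ : -k₁ < -Real.sqrt (μ + |c|) := neg_lt_neg hk₁
    refine ⟨?_, ?_, fun p hp => hBpos _ hp.2, fun p hp => hCneg _ hp.2, ?_, ?_⟩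
    · ext S
      constructor
      · rintro ⟨⟨k, y⟩, hp, rfl⟩
        rcases lt_abs.1 (abs_lt_of_mem_wavetrain hc hp.1 hp.2) with hk | hk
        · dsimp only at hk
          nlinarith [sq_nonneg k]
        · rcases sqrt_lt_or_lt_neg_sqrt (k := k) hμ (by dsimp only at hk; linarith) with hk | hk
          · exact Or.inl (wavetrain_component_right hc hp hμ hk)
          · exact Or.inr (wavetrain_component_left hc hp hμ hk)
      · rintro (rfl | rfl)
        · exact ⟨(k₁, y₁), hW₁, wavetrain_component_right hc hW₁ hμ hk₁⟩
        · exact ⟨(-k₁, y₁), hW₂, wavetrain_component_left hc hW₂ hμ hk₂⟩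
    · intro heq
      exact lt_asymm (hBpos _ hk₁) (hCneg _ (heq.subset ⟨hW₁, hk₁⟩ : (k₁, y₁) ∈ _).2)
    · intro M
      obtain ⟨k, y, hW, hk, hM⟩ := exists_wavetrain_right c μ M
      exact ⟨(k, y), ⟨hW, hk⟩, hM⟩
    · intro M
      obtain ⟨k, y, hW, hk, hM⟩ := exists_wavetrain_right c μ M
      refine ⟨(-k, y), ⟨?_, neg_lt_neg hk⟩, neg_lt_neg hM⟩
      change y ∈ Set.Ioo (-1 : ℝ) 1 ∧ y * (μ - (-k) ^ 2) = c
      rwa [neg_sq]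
  · intro hcμ
    ext ⟨k, y⟩
    exact mem_wavetrain_iff (lt_abs.2 (Or.inr (by nlinarith [sq_nonneg k])))
end

section
/- Fix α > 0 and β, h, μ, k ∈ ℝ with |μ − k²| > |h − β/α|; set m₃ = (h − β/α)/(μ − k²), r² = 1 − m₃², D = (3k² + μ)(β/α − h)²/(k² − μ)² + k² − μ, and for ℓ ∈ ℝ let p_ℓ(λ) = λ² − T(ℓ)λ + Δ(ℓ) with T(ℓ) = −2αℓ² + 4 i k m₃ ℓ + α r²(k² − μ) and Δ(ℓ) = (1 + α²) ℓ² (ℓ² − D). Then: (i) if k² < μ and D < 0, then for every ℓ ∈ ℝ every root λ ∈ ℂ of p_ℓ satisfies Re λ ≤ 0, and Re λ = 0 only for (ℓ, λ) = (0, 0) (spectral stability of the wavetrain); (ii) if k² > μ, then p₀ has the root α r²(k² − μ) > 0 (instability); (iii) if k² < μ and D > 0, then there exists ℓ₀ > 0 such that for every ℓ with 0 < |ℓ| < ℓ₀ the quadratic p_ℓ has a root with Re λ > 0 (sideband instability). -/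
/-!
The trace is `T(ℓ) = -A + i B` with `A = 2αℓ² + α r² (μ - k²)` and `B = 4 k m₃ ℓ`, while `Δ(ℓ)` is real.
The existence condition gives `m₃² < 1`, so `r² > 0`, and hence `A > 0` when `k² < μ`.
Multiplying `z (T - z) = Δ` by the conjugate of `z` and taking real parts gives, for every root `z`,
`(A + Re z) |z|² + Δ Re z = 0` (`pquad_root_identity`), in which `B` no longer appears.

If `D < 0`, then `Δ ≥ 0`, with equality only at `ℓ = 0`, and the identity excludes `Re z ≥ 0` unless
`z = 0` and `Δ = 0`. If `D > 0`, then `Δ < 0` for `0 < |ℓ| < √D`; the identity then shows that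
no root is purely imaginary and that a root with `Re z < 0` satisfies `A + Re z < 0`, so that then
the other root `T - z` has positive real part.
-/

/-- The quadratic `p_ℓ(z) = z² − T(ℓ) z + Δ(ℓ)` whose roots form the `L²`-spectrum of the
linearization of the LLGS equation about the wavetrain with wavenumber `k`, where
`T(ℓ) = −2αℓ² + 4 i k m₃ ℓ + α r² (k² − μ)` and `Δ(ℓ) = (1 + α²) ℓ² (ℓ² − D)`. -/
noncomputable def pquad (α μ k m₃ r2 D : ℝ) (ℓ : ℝ) (z : ℂ) : ℂ :=
  z ^ 2
    - (-(2 * (α : ℂ) * (ℓ : ℂ) ^ 2) + 4 * Complex.I * (k : ℂ) * (m₃ : ℂ) * (ℓ : ℂ)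
        + (α : ℂ) * (r2 : ℂ) * ((k : ℂ) ^ 2 - (μ : ℂ))) * z
    + (1 + (α : ℂ) ^ 2) * (ℓ : ℂ) ^ 2 * ((ℓ : ℂ) ^ 2 - (D : ℂ))

/-- The real part of `conj z * p_ℓ(z) = 0`: the imaginary part of the trace drops out. -/
lemma pquad_root_identity (α μ k m₃ r2 D ℓ : ℝ) (z : ℂ) (hz : pquad α μ k m₃ r2 D ℓ z = 0) :
    (2 * α * ℓ ^ 2 + α * r2 * (μ - k ^ 2) + z.re) * (z.re ^ 2 + z.im ^ 2)
      + (1 + α ^ 2) * ℓ ^ 2 * (ℓ ^ 2 - D) * z.re = 0 := by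
  have hre := congrArg Complex.re hz
  have him := congrArg Complex.im hz
  simp [pquad, pow_two] at hre him
  linear_combination z.re * hre + z.im * him

lemma pquad_zero_root (α μ k m₃ r2 D ℓ : ℝ) (hz : pquad α μ k m₃ r2 D ℓ 0 = 0) :
    (1 + α ^ 2) * ℓ ^ 2 * (ℓ ^ 2 - D) = 0 := by
  have h : (((1 + α ^ 2) * ℓ ^ 2 * (ℓ ^ 2 - D) : ℝ) : ℂ) = 0 := by
    rw [← hz, pquad]
    push_cast
    ring
  exact_mod_cast h

lemma exists_pquad_root (α μ k m₃ r2 D ℓ : ℝ) : ∃ z : ℂ, pquad α μ k m₃ r2 D ℓ z = 0 := by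
  obtain ⟨T, hT⟩ : ∃ T : ℂ, T = -(2 * (α : ℂ) * (ℓ : ℂ) ^ 2)
    + 4 * Complex.I * (k : ℂ) * (m₃ : ℂ) * (ℓ : ℂ)
    + (α : ℂ) * (r2 : ℂ) * ((k : ℂ) ^ 2 - (μ : ℂ)) := ⟨_, rfl⟩
  obtain ⟨s, hs⟩ := IsAlgClosed.exists_pow_nat_eq
    (T ^ 2 - 4 * ((1 + (α : ℂ) ^ 2) * (ℓ : ℂ) ^ 2 * ((ℓ : ℂ) ^ 2 - (D : ℂ)))) (n := 2) (by norm_num)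
  refine ⟨(T + s) / 2, ?_⟩
  rw [pquad, ← hT]
  linear_combination hs / 4

/-- The second root, `T(ℓ) - z`, described by its real part. -/
lemma exists_pquad_conjugate_root (α μ k m₃ r2 D ℓ : ℝ) (z : ℂ)
    (hz : pquad α μ k m₃ r2 D ℓ z = 0) :
    ∃ w : ℂ, pquad α μ k m₃ r2 D ℓ w = 0 ∧
      w.re = -(2 * α * ℓ ^ 2 + α * r2 * (μ - k ^ 2) + z.re) := by
  refine ⟨-(2 * (α : ℂ) * (ℓ : ℂ) ^ 2) + 4 * Complex.I * (k : ℂ) * (m₃ : ℂ) * (ℓ : ℂ)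
    + (α : ℂ) * (r2 : ℂ) * ((k : ℂ) ^ 2 - (μ : ℂ)) - z, ?_, ?_⟩
  · rw [← hz, pquad, pquad]
    ring
  · simp [pow_two]
    ring

lemma r2_pos {α β h μ k m₃ r2 : ℝ} (hex : |h - β / α| < |μ - k ^ 2|)
    (hm3 : m₃ = (h - β / α) / (μ - k ^ 2)) (hr2 : r2 = 1 - m₃ ^ 2) : 0 < r2 := by
  have hpos : 0 < |μ - k ^ 2| := (abs_nonneg _).trans_lt hex
  have hlt : |m₃| < 1 := by rwa [hm3, abs_div, div_lt_one hpos]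
  have := (sq_lt_one_iff_abs_lt_one m₃).2 hlt
  linarith

theorem stmt5 (α β h μ k m₃ r2 D : ℝ) (hα : 0 < α)
    (hex : |h - β / α| < |μ - k ^ 2|)
    (hm3 : m₃ = (h - β / α) / (μ - k ^ 2)) (hr2 : r2 = 1 - m₃ ^ 2)
    (hD : D = (3 * k ^ 2 + μ) * (β / α - h) ^ 2 / (k ^ 2 - μ) ^ 2 + k ^ 2 - μ) :
    -- (i) spectral stability for `k² < μ` and `D < 0`
    (k ^ 2 < μ → D < 0 →
      ∀ (ℓ : ℝ) (z : ℂ), pquad α μ k m₃ r2 D ℓ z = 0 →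
        z.re ≤ 0 ∧ (z.re = 0 → ℓ = 0 ∧ z = 0)) ∧
    -- (ii) instability for `k² > μ`: a positive real root at `ℓ = 0`
    (μ < k ^ 2 →
      pquad α μ k m₃ r2 D 0 ((α * r2 * (k ^ 2 - μ) : ℝ) : ℂ) = 0 ∧
        0 < α * r2 * (k ^ 2 - μ)) ∧
    -- (iii) sideband instability for `k² < μ` and `D > 0`
    (k ^ 2 < μ → 0 < D →
      ∃ ℓ₀ > (0 : ℝ), ∀ ℓ : ℝ, 0 < |ℓ| → |ℓ| < ℓ₀ →
        ∃ z : ℂ, pquad α μ k m₃ r2 D ℓ z = 0 ∧ 0 < z.re) := by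
  have hr : 0 < r2 := r2_pos hex hm3 hr2
  refine ⟨fun hk hDneg ℓ z hz => ?_, fun hk => ⟨?_, ?_⟩, fun hk hDpos => ?_⟩
  · have hid := pquad_root_identity α μ k m₃ r2 D ℓ z hz
    have hA : 0 < 2 * α * ℓ ^ 2 + α * r2 * (μ - k ^ 2) := by
      have := mul_pos (mul_pos hα hr) (sub_pos.2 hk)
      positivity
    have hE : 0 < ℓ ^ 2 - D := by nlinarith [sq_nonneg ℓ]
    have hΔ : 0 ≤ (1 + α ^ 2) * ℓ ^ 2 * (ℓ ^ 2 - D) := by positivity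
    -- A root in the closed right half-plane must vanish, since both summands of `hid` do.
    have hzero : 0 ≤ z.re → z = 0 := fun hx => by
      have hle : (2 * α * ℓ ^ 2 + α * r2 * (μ - k ^ 2) + z.re) * (z.re ^ 2 + z.im ^ 2) ≤ 0 := by
        linarith [mul_nonneg hΔ hx]
      have hn : z.re ^ 2 + z.im ^ 2 ≤ 0 :=
        nonpos_of_mul_nonpos_right hle (by linarith)
      apply Complex.ext
      · exact pow_eq_zero_iff two_ne_zero |>.1 (by nlinarith [sq_nonneg z.re, sq_nonneg z.im])
      · exact pow_eq_zero_iff two_ne_zero |>.1 (by nlinarith [sq_nonneg z.re, sq_nonneg z.im])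
    refine ⟨?_, fun hx => ?_⟩
    · by_contra! hx
      simp [hzero hx.le] at hx
    · have hz0 := hzero hx.ge
      refine ⟨?_, hz0⟩
      by_contra hℓ
      have hΔpos : 0 < (1 + α ^ 2) * ℓ ^ 2 * (ℓ ^ 2 - D) := by positivity
      rw [hz0] at hz
      exact hΔpos.ne' (pquad_zero_root _ _ _ _ _ _ _ hz)
  · simp [pquad]
    ring
  · have := sub_pos.2 hk
    positivity
  · refine ⟨√D, Real.sqrt_pos.2 hDpos, fun ℓ hℓ hℓD => ?_⟩
    have hE : ℓ ^ 2 - D < 0 := by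
      have := (Real.lt_sqrt (abs_nonneg ℓ)).1 hℓD
      rw [sq_abs] at this
      linarith
    have hℓ0 : ℓ ≠ 0 := abs_pos.1 hℓ
    have hΔ : (1 + α ^ 2) * ℓ ^ 2 * (ℓ ^ 2 - D) < 0 := mul_neg_of_pos_of_neg (by positivity) hE
    have hA : 0 < 2 * α * ℓ ^ 2 + α * r2 * (μ - k ^ 2) := by
      have := mul_pos (mul_pos hα hr) (sub_pos.2 hk)
      positivity
    obtain ⟨z, hz⟩ := exists_pquad_root α μ k m₃ r2 D ℓ
    have hid := pquad_root_identity α μ k m₃ r2 D ℓ z hz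
    rcases lt_trichotomy z.re 0 with hx | hx | hx
    · obtain ⟨w, hw, hwre⟩ := exists_pquad_conjugate_root α μ k m₃ r2 D ℓ z hz
      refine ⟨w, hw, ?_⟩
      have hneg : (2 * α * ℓ ^ 2 + α * r2 * (μ - k ^ 2) + z.re) * (z.re ^ 2 + z.im ^ 2) < 0 := by
        linarith [mul_pos_of_neg_of_neg hΔ hx]
      have := neg_of_mul_neg_left hneg (by positivity)
      linarith
    · -- A purely imaginary root would be `0`, forcing `Δ = 0`.
      exfalso
      rw [hx] at hid
      have him : z.im = 0 := by
        have : (2 * α * ℓ ^ 2 + α * r2 * (μ - k ^ 2)) * z.im ^ 2 = 0 := by linarith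
        exact pow_eq_zero_iff two_ne_zero |>.1 ((mul_eq_zero.1 this).resolve_left hA.ne')
      rw [show z = 0 from Complex.ext hx him] at hz
      exact hΔ.ne (pquad_zero_root _ _ _ _ _ _ _ hz)
    · exact ⟨z, hz, hx⟩
end

section
/- Let α > 0 and β, h, μ ∈ ℝ with 0 < |h − β/α| < μ, and define f : ℝ → ℝ by f(K) = K³ − 3μK² + 3(μ² + (β/α − h)²)K + μ((β/α − h)² − μ²). Then f′(K) = 3(β/α − h)² + 3(K − μ)² > 0 for all K ∈ ℝ, f(0) = μ((β/α − h)² − μ²) < 0 and f(μ) = 4μ(β/α − h)² > 0; hence there is a unique K* ∈ (0, μ) with f(K*) = 0. Moreover, for every k with k² < μ one has (k² − μ)² D = f(k²), where D = (3k² + μ)(β/α − h)²/(k² − μ)² + k² − μ; consequently D < 0 if and only if k² < K*, and D > 0 if and only if K* < k² < μ. In particular D < 0 at k = 0. -/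
/-!
Write `s = (β/α − h)²`, so `0 < s < μ²`. Completing the cube gives
`f(K) = (K − μ)³ + (3K + μ) s`, which is `(K − μ)² D` at `K = k²`. As `f' = 3s + 3(K − μ)² > 0`,
`f` is strictly increasing; with `f(0) < 0 < f(μ)` the intermediate value theorem gives the unique
root `K*`, and for `k² < μ` the sign of `D` is the sign of `f(k²)`, i.e. that of `k² − K*`.
-/

/-- The cubic `f(K) = K³ − 3μK² + 3(μ² + (β/α − h)²)K + μ((β/α − h)² − μ²)` governing the
sideband instability of wavetrains. -/
noncomputable def fcubic (α β h μ : ℝ) (K : ℝ) : ℝ :=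
  K ^ 3 - 3 * μ * K ^ 2 + 3 * (μ ^ 2 + (β / α - h) ^ 2) * K + μ * ((β / α - h) ^ 2 - μ ^ 2)

theorem stmt6 (α β h μ : ℝ) (hα : 0 < α) (habs : 0 < |h - β / α|) (hμ : |h - β / α| < μ) :
    -- derivative formula and positivity
    (∀ K : ℝ, deriv (fcubic α β h μ) K = 3 * (β / α - h) ^ 2 + 3 * (K - μ) ^ 2 ∧
        0 < deriv (fcubic α β h μ) K) ∧
    -- boundary values
    fcubic α β h μ 0 = μ * ((β / α - h) ^ 2 - μ ^ 2) ∧ fcubic α β h μ 0 < 0 ∧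
    fcubic α β h μ μ = 4 * μ * (β / α - h) ^ 2 ∧ 0 < fcubic α β h μ μ ∧
    -- unique root `K* ∈ (0, μ)` and the sideband criterion
    (∃ Ks ∈ Set.Ioo (0 : ℝ) μ, fcubic α β h μ Ks = 0 ∧
      (∀ K' ∈ Set.Ioo (0 : ℝ) μ, fcubic α β h μ K' = 0 → K' = Ks) ∧
      (∀ k : ℝ, k ^ 2 < μ →
        (k ^ 2 - μ) ^ 2 * ((3 * k ^ 2 + μ) * (β / α - h) ^ 2 / (k ^ 2 - μ) ^ 2 + k ^ 2 - μ)
            = fcubic α β h μ (k ^ 2) ∧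
        ((3 * k ^ 2 + μ) * (β / α - h) ^ 2 / (k ^ 2 - μ) ^ 2 + k ^ 2 - μ < 0 ↔ k ^ 2 < Ks) ∧
        (0 < (3 * k ^ 2 + μ) * (β / α - h) ^ 2 / (k ^ 2 - μ) ^ 2 + k ^ 2 - μ ↔ Ks < k ^ 2))) ∧
    -- in particular `D < 0` at `k = 0`
    (3 * (0 : ℝ) ^ 2 + μ) * (β / α - h) ^ 2 / ((0 : ℝ) ^ 2 - μ) ^ 2 + (0 : ℝ) ^ 2 - μ < 0 := by
  have hμ0 : 0 < μ := habs.trans hμ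
  have hs : 0 < (β / α - h) ^ 2 := by
    rw [← sq_abs, abs_sub_comm]; positivity
  have hsμ : (β / α - h) ^ 2 < μ ^ 2 := by
    rw [← sq_abs, abs_sub_comm]; gcongr
  have hder : ∀ K : ℝ, HasDerivAt (fcubic α β h μ)
      (3 * (β / α - h) ^ 2 + 3 * (K - μ) ^ 2) K := by
    intro K
    have h1 := ((((hasDerivAt_id K).pow 3).sub (((hasDerivAt_id K).pow 2).const_mul (3 * μ))).add
      ((hasDerivAt_id K).const_mul (3 * (μ ^ 2 + (β / α - h) ^ 2)))).add_const
      (μ * ((β / α - h) ^ 2 - μ ^ 2))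
    refine h1.congr_deriv ?_
    simp only [id]
    push_cast
    ring
  have hpos : ∀ K : ℝ, 0 < deriv (fcubic α β h μ) K := by
    intro K
    rw [(hder K).deriv]
    positivity
  have hmono : StrictMono (fcubic α β h μ) := strictMono_of_deriv_pos hpos
  have h0 : fcubic α β h μ 0 = μ * ((β / α - h) ^ 2 - μ ^ 2) := by
    unfold fcubic; ring
  have h0neg : fcubic α β h μ 0 < 0 := by
    rw [h0]; exact mul_neg_of_pos_of_neg hμ0 (sub_neg.mpr hsμ)
  have hm : fcubic α β h μ μ = 4 * μ * (β / α - h) ^ 2 := by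
    unfold fcubic; ring
  have hmpos : 0 < fcubic α β h μ μ := by
    rw [hm]; positivity
  have hcont : Continuous (fcubic α β h μ) :=
    continuous_iff_continuousAt.mpr fun K => (hder K).continuousAt
  obtain ⟨Ks, hKs, hroot⟩ := intermediate_value_Ioo hμ0.le hcont.continuousOn ⟨h0neg, hmpos⟩
  have hcrit : ∀ k : ℝ, k ^ 2 < μ →
      (k ^ 2 - μ) ^ 2 * ((3 * k ^ 2 + μ) * (β / α - h) ^ 2 / (k ^ 2 - μ) ^ 2 + k ^ 2 - μ)
          = fcubic α β h μ (k ^ 2) ∧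
      ((3 * k ^ 2 + μ) * (β / α - h) ^ 2 / (k ^ 2 - μ) ^ 2 + k ^ 2 - μ < 0 ↔ k ^ 2 < Ks) ∧
      (0 < (3 * k ^ 2 + μ) * (β / α - h) ^ 2 / (k ^ 2 - μ) ^ 2 + k ^ 2 - μ ↔ Ks < k ^ 2) := by
    intro k hk
    have hne : k ^ 2 - μ ≠ 0 := (sub_neg.mpr hk).ne
    have hsq : 0 < (k ^ 2 - μ) ^ 2 := by positivity
    have hD : (k ^ 2 - μ) ^ 2 *
        ((3 * k ^ 2 + μ) * (β / α - h) ^ 2 / (k ^ 2 - μ) ^ 2 + k ^ 2 - μ)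
          = fcubic α β h μ (k ^ 2) := by
      rw [add_sub_assoc, mul_add, mul_div_cancel₀ _ hsq.ne']
      unfold fcubic
      ring
    refine ⟨hD, ?_, ?_⟩
    · rw [← hmono.lt_iff_lt (a := k ^ 2), hroot, ← hD]
      exact ⟨mul_neg_of_pos_of_neg hsq,
        fun hlt => lt_of_not_ge fun hge => hlt.not_ge (mul_nonneg hsq.le hge)⟩
    · rw [← hmono.lt_iff_lt (b := k ^ 2), hroot, ← hD, mul_pos_iff_of_pos_left hsq]
  refine ⟨fun K => ⟨(hder K).deriv, hpos K⟩, h0, h0neg, hm, hmpos,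
    ⟨Ks, hKs, hroot, fun K' _ hK' => hmono.injective (hK'.trans hroot.symm), hcrit⟩, ?_⟩
  exact (hcrit 0 (by simpa using hμ0)).2.1.mpr (by simpa using hKs.1)
end

section
/- Let α > 0 and β, h, μ, k ∈ ℝ with k² < μ and |μ − k²| > |h − β/α|; set m₃ = (h − β/α)/(μ − k²), r² = 1 − m₃² > 0, D = (3k² + μ)(β/α − h)²/(k² − μ)² + k² − μ, and p_ℓ(λ) = λ² − T(ℓ)λ + Δ(ℓ) with T(ℓ) = −2αℓ² + 4 i k m₃ ℓ + α r²(k² − μ), Δ(ℓ) = (1 + α²)ℓ²(ℓ² − D). Then: (i) for every ℓ ∈ ℝ and every γ ∈ ℝ \ {0}, p_ℓ(iγ) ≠ 0 (there is no Hopf-type marginal configuration); (ii) if in addition D < 0, then p_ℓ(0) ≠ 0 for every ℓ ≠ 0 (there is no Turing-type marginal configuration). -/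
theorem stmt7 (α β h μ k m₃ r2 D : ℝ) (hα : 0 < α)
    (hkμ : k ^ 2 < μ) (hex : |h - β / α| < |μ - k ^ 2|)
    (hm3 : m₃ = (h - β / α) / (μ - k ^ 2)) (hr2 : r2 = 1 - m₃ ^ 2)
    (hD : D = (3 * k ^ 2 + μ) * (β / α - h) ^ 2 / (k ^ 2 - μ) ^ 2 + k ^ 2 - μ) :
    -- (i) no Hopf-type marginal configuration: no purely imaginary nonzero root
    (∀ ℓ γ : ℝ, γ ≠ 0 → pquad α μ k m₃ r2 D ℓ (Complex.I * (γ : ℂ)) ≠ 0) ∧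
    -- (ii) no Turing-type marginal configuration: no zero root at nonzero `ℓ` when `D < 0`
    (D < 0 → ∀ ℓ : ℝ, ℓ ≠ 0 → pquad α μ k m₃ r2 D ℓ 0 ≠ 0) := by
  have hpos : 0 < μ - k ^ 2 := by linarith
  have hr2_pos : 0 < r2 := by
    have hm_abs : |m₃| < 1 := by
      rw [hm3, abs_div, div_lt_one (lt_of_le_of_lt (abs_nonneg _) hex)]
      exact hex
    have hm_sq : m₃ ^ 2 < 1 := (sq_lt_one_iff_abs_lt_one m₃).2 hm_abs
    linarith
  constructor
  · intro ℓ γ hγ hroot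
    -- The imaginary part of `p_ℓ(iγ)` is `-γ Re T(ℓ)`, so `Re T(ℓ) = 0` after cancelling `γ ≠ 0`.
    have him : 2 * α * ℓ ^ 2 + α * r2 * (μ - k ^ 2) = 0 := by
      have him_pquad := congrArg Complex.im hroot
      simp [pquad, pow_two, hγ] at him_pquad
      linear_combination -him_pquad
    have hT : 0 < 2 * α * ℓ ^ 2 + α * r2 * (μ - k ^ 2) := by positivity
    exact hT.ne' him
  · intro hD_neg ℓ hℓ hroot
    have hΔ : (1 + α ^ 2) * ℓ ^ 2 * (ℓ ^ 2 - D) = 0 := by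
      have hΔ_cast : (((1 + α ^ 2) * ℓ ^ 2 * (ℓ ^ 2 - D) : ℝ) : ℂ) = 0 := by
        rw [← hroot, pquad]
        push_cast
        ring
      exact_mod_cast hΔ_cast
    have hℓD : 0 < ℓ ^ 2 - D := by linarith [sq_nonneg ℓ]
    have hΔ_pos : 0 < (1 + α ^ 2) * ℓ ^ 2 * (ℓ ^ 2 - D) := by positivity
    exact hΔ_pos.ne' hΔ
end

section
/- Let h, Ω, μ ∈ ℝ with h − Ω > |μ| > 0 (subcritical anisotropy). Then there exists a C² solution θ : ℝ → ℝ of the pendulum equation θ″ = sin θ (h − Ω − μ cos θ) with θ′(ξ) > 0 for all ξ ∈ ℝ, lim_{ξ→−∞} θ(ξ) = 0 and lim_{ξ→+∞} θ(ξ) = 2π; together with the reflected solution −θ (which decreases from 0 to −2π) this gives a pair of soliton-type stationary coherent structure profiles homoclinic to ê₃ that cross −ê₃ in opposite directions. -/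
/-!
Write `a = h - Ω`, so that `a > 0` and `a - μ > 0`. On the energy level of the equilibrium `θ = 0`,
the pendulum equation has the first integral `θ'² = 4 sin² (θ/2) (a - μ cos² (θ/2))`. The
substitution `u = -cot (θ/2)` turns it into `u' = √(a + (a - μ) u²)`, which is solved by
`u ξ = √a / k * sinh (k ξ)` with `k = √(a - μ)`. Undoing the substitution gives the explicit profile
`θ = π + 2 arctan u`. Since `u' > 0` and `u → ±∞` as `ξ → ±∞`, it increases from `0` to `2π`; the
equation itself is checked by differentiating twice, using `u'' = (a - μ) u` and
`u'² = a + (a - μ) u²`. The claims on `-θ` follow by oddness.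
-/

open Real Filter Topology

lemma sin_pi_add_two_mul_arctan (u : ℝ) :
    sin (π + 2 * arctan u) = -(2 * u / (1 + u ^ 2)) := by
  have hp : (0 : ℝ) < 1 + u ^ 2 := by positivity
  have hs : √(1 + u ^ 2) ^ 2 = 1 + u ^ 2 := sq_sqrt hp.le
  rw [add_comm, sin_add_pi, sin_two_mul, sin_arctan, cos_arctan, ← hs]
  have := (sqrt_pos.2 hp).ne'
  rw [sqrt_sq (sqrt_nonneg _)]
  field_simp

lemma cos_pi_add_two_mul_arctan (u : ℝ) :
    cos (π + 2 * arctan u) = -((1 - u ^ 2) / (1 + u ^ 2)) := by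
  have hp : (0 : ℝ) < 1 + u ^ 2 := by positivity
  rw [add_comm, cos_add_pi, cos_two_mul, cos_sq_arctan]
  field_simp
  ring

theorem stmt8 (h Ω μ : ℝ) (hμ : 0 < |μ|) (hsub : |μ| < h - Ω) :
    ∃ θ : ℝ → ℝ, ContDiff ℝ 2 θ ∧
      (∀ ξ : ℝ, deriv (deriv θ) ξ = Real.sin (θ ξ) * (h - Ω - μ * Real.cos (θ ξ))) ∧
      (∀ ξ : ℝ, 0 < deriv θ ξ) ∧
      Filter.Tendsto θ Filter.atBot (nhds 0) ∧
      Filter.Tendsto θ Filter.atTop (nhds (2 * Real.pi)) ∧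
      -- the reflected profile `−θ` is also a solution, decreasing from `0` to `−2π`
      (∀ ξ : ℝ, deriv (deriv (fun x => -θ x)) ξ =
          Real.sin (-θ ξ) * (h - Ω - μ * Real.cos (-θ ξ))) ∧
      (∀ ξ : ℝ, deriv (fun x => -θ x) ξ < 0) ∧
      Filter.Tendsto (fun x => -θ x) Filter.atBot (nhds 0) ∧
      Filter.Tendsto (fun x => -θ x) Filter.atTop (nhds (-(2 * Real.pi))) := by
  generalize h - Ω = a at *
  have ha : 0 < a := hμ.trans hsub
  have hk0 : 0 < a - μ := by linarith [le_abs_self μ]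
  obtain ⟨k, hk, hk2⟩ : ∃ k : ℝ, 0 < k ∧ k ^ 2 = a - μ := ⟨√(a - μ), sqrt_pos.2 hk0, sq_sqrt hk0.le⟩
  obtain ⟨b, hb, hb2⟩ : ∃ b : ℝ, 0 < b ∧ b ^ 2 = a := ⟨√a, sqrt_pos.2 ha, sq_sqrt ha.le⟩
  let u : ℝ → ℝ := fun ξ => b / k * sinh (k * ξ)
  let v : ℝ → ℝ := fun ξ => b * cosh (k * ξ)
  have hlin : ∀ ξ : ℝ, HasDerivAt (fun ξ => k * ξ) k ξ := fun ξ => by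
    simpa using (hasDerivAt_id ξ).const_mul k
  have hu : ∀ ξ, HasDerivAt u (v ξ) ξ := fun ξ => by
    refine ((hlin ξ).sinh.const_mul (b / k)).congr_deriv ?_
    simp only [v]
    field_simp
  have hv : ∀ ξ, HasDerivAt v (k ^ 2 * u ξ) ξ := fun ξ => by
    refine ((hlin ξ).cosh.const_mul b).congr_deriv ?_
    simp only [u]
    field_simp
  have hvu : ∀ ξ, v ξ ^ 2 = b ^ 2 + k ^ 2 * u ξ ^ 2 := fun ξ => by
    simp only [u, v]
    rw [mul_pow, cosh_sq]
    field_simp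
    ring
  have hp : ∀ ξ, 0 < 1 + u ξ ^ 2 := fun ξ => by positivity
  let θ : ℝ → ℝ := fun ξ => π + 2 * arctan (u ξ)
  have hθ : ∀ ξ, HasDerivAt θ (2 * v ξ / (1 + u ξ ^ 2)) ξ := fun ξ => by
    refine (((hu ξ).arctan.const_mul 2).const_add π).congr_deriv ?_
    ring
  have hd : deriv θ = fun ξ => 2 * v ξ / (1 + u ξ ^ 2) := funext fun ξ => (hθ ξ).deriv
  have hode : ∀ ξ, deriv (deriv θ) ξ = sin (θ ξ) * (a - μ * cos (θ ξ)) := fun ξ => by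
    have h2 := ((hv ξ).const_mul 2).fun_div (((hu ξ).fun_pow 2).const_add 1) (hp ξ).ne'
    rw [hd, h2.deriv]
    simp only [θ]
    rw [sin_pi_add_two_mul_arctan, cos_pi_add_two_mul_arctan]
    have := (hp ξ).ne'
    have hμ' : μ = b ^ 2 - k ^ 2 := by linarith
    have hvξ := hvu ξ
    rw [hμ', ← hb2]
    clear_value u v
    field_simp
    push_cast
    linear_combination (-2 * u ξ) * hvξ
  have hpos : ∀ ξ, 0 < deriv θ ξ := fun ξ => by
    rw [hd]
    have : 0 < v ξ := mul_pos hb (cosh_pos _)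
    have := hp ξ
    positivity
  have hsinhTop : Tendsto sinh atTop atTop :=
    tendsto_atTop_mono' _ ((eventually_ge_atTop 0).mono fun x hx => self_le_sinh_iff.2 hx) tendsto_id
  have huTop : Tendsto u atTop atTop :=
    (hsinhTop.comp (tendsto_id.const_mul_atTop hk)).const_mul_atTop (div_pos hb hk)
  have huBot : Tendsto u atBot atBot := by
    have := tendsto_neg_atTop_atBot.comp (huTop.comp tendsto_neg_atBot_atTop)
    refine this.congr fun x => ?_
    simp [u]
  have hbot : Tendsto θ atBot (𝓝 0) := by
    have h1 := (tendsto_arctan_atBot.mono_right nhdsWithin_le_nhds).comp huBot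
    have h2 := (h1.const_mul 2).const_add π
    rwa [show π + 2 * -(π / 2) = 0 by ring] at h2
  have htop : Tendsto θ atTop (𝓝 (2 * π)) := by
    have h1 := (tendsto_arctan_atTop.mono_right nhdsWithin_le_nhds).comp huTop
    have h2 := (h1.const_mul 2).const_add π
    rwa [show π + 2 * (π / 2) = 2 * π by ring] at h2
  have hneg : deriv (fun x => -θ x) = fun x => -deriv θ x := funext fun x => deriv.fun_neg
  refine ⟨θ, ?_, hode, hpos, hbot, htop, fun ξ => ?_, fun ξ => ?_, by simpa using hbot.neg, htop.neg⟩
  · have : ContDiff ℝ 2 u :=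
      contDiff_const.mul (contDiff_sinh.comp (contDiff_const.mul contDiff_id))
    exact contDiff_const.add (contDiff_const.mul (contDiff_arctan.comp this))
  · rw [hneg, deriv.fun_neg, hode, sin_neg, cos_neg]
    ring
  · rw [hneg]
    exact neg_neg_of_pos (hpos ξ)
end

section
/- Let h, Ω, μ ∈ ℝ with μ > h − Ω > 0 (supercritical anisotropy) and set θ₁ = arccos((h − Ω)/μ) ∈ (0, π/2). Then there exist C² solutions θa, θb : ℝ → ℝ of the pendulum equation θ″ = sin θ (h − Ω − μ cos θ) such that: θa is strictly increasing with θa(ξ) ∈ (−θ₁, θ₁) for all ξ, lim_{ξ→−∞} θa(ξ) = −θ₁ and lim_{ξ→+∞} θa(ξ) = θ₁ (a heteroclinic profile crossing ê₃); and θb is strictly increasing with θb(ξ) ∈ (θ₁, 2π − θ₁) for all ξ, lim_{ξ→−∞} θb(ξ) = θ₁ and lim_{ξ→+∞} θb(ξ) = 2π − θ₁ (a heteroclinic profile crossing −ê₃). Together with their reflections −θa and −θb these form two pairs of heteroclinic connections between the spatially homogeneous wavetrain (θ = θ₁) and its azimuthal phase shift by π. -/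
/-!
The energy level of the wavetrain factors the pendulum equation: with `c = cos θ₁ = (h - Ω) / μ`,
any solution of the first-order equation `θ' = ±√μ (cos θ - c)` satisfies
`θ'' = -μ sin θ (cos θ - c) = sin θ (h - Ω - μ cos θ)`.

The half-angle substitution `u = tan (θ / 2)` turns `θ' = a (cos θ - cos t)` into a Riccati equation
solved by a rescaled `tanh`, giving the explicit front `2 arctan (tan (t / 2) tanh (k x))` from `-t`
to `t`, for every `t ∈ (0, π)` (`exists_front`). The profile through `ê₃` is this front with
`t = θ₁`. Shifting by `π` changes the sign of the cosine, so the profile through `-ê₃` is `π` plus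
the front with `t = π - θ₁`.
-/

open Real Filter Topology

/-- The function `tanh (k x)`, written with a single exponential. -/
noncomputable def tanhFront (k x : ℝ) : ℝ := 1 - 2 / (exp (2 * k * x) + 1)

lemma tanhFront_contDiff (k : ℝ) : ContDiff ℝ 2 (tanhFront k) := by
  unfold tanhFront
  refine contDiff_const.sub (contDiff_const.div (by fun_prop) fun x => ?_)
  positivity

lemma tanhFront_hasDerivAt (k x : ℝ) :
    HasDerivAt (tanhFront k) (k * (1 - tanhFront k x ^ 2)) x := by
  have hne : exp (2 * k * x) + 1 ≠ 0 := by positivity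
  have h0 : HasDerivAt (fun x : ℝ => 2 * k * x) (2 * k) x := by
    simpa using (hasDerivAt_id x).const_mul (2 * k)
  have h := (((hasDerivAt_const x (2 : ℝ)).div (h0.exp.add_const 1) hne).const_sub 1)
  refine h.congr_deriv ?_
  unfold tanhFront
  field_simp
  ring

lemma tanhFront_strictMono {k : ℝ} (hk : 0 < k) : StrictMono (tanhFront k) := by
  intro x y hxy
  unfold tanhFront
  gcongr

lemma tanhFront_lt_one (k x : ℝ) : tanhFront k x < 1 := by
  have : 0 < 2 / (exp (2 * k * x) + 1) := by positivity
  unfold tanhFront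
  linarith

lemma neg_one_lt_tanhFront (k x : ℝ) : -1 < tanhFront k x := by
  have : 2 / (exp (2 * k * x) + 1) < 2 := by
    rw [div_lt_iff₀ (by positivity)]
    linarith [exp_pos (2 * k * x)]
  unfold tanhFront
  linarith

lemma tanhFront_tendsto_atTop {k : ℝ} (hk : 0 < k) : Tendsto (tanhFront k) atTop (𝓝 1) := by
  have h0 : Tendsto (fun x : ℝ => 2 * k * x) atTop atTop :=
    tendsto_id.const_mul_atTop (by positivity)
  have h := (tendsto_const_nhds (x := (2 : ℝ))).div_atTop
    (tendsto_atTop_add_const_right _ (1 : ℝ) (tendsto_exp_atTop.comp h0))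
  have h' := h.const_sub 1
  rw [sub_zero] at h'
  exact h'

lemma tanhFront_tendsto_atBot {k : ℝ} (hk : 0 < k) : Tendsto (tanhFront k) atBot (𝓝 (-1)) := by
  have h0 : Tendsto (fun x : ℝ => 2 * k * x) atBot atBot :=
    tendsto_id.const_mul_atBot (by positivity)
  have h := (tendsto_const_nhds (x := (2 : ℝ))).div
    ((tendsto_exp_atBot.comp h0).add_const 1) (by norm_num)
  have h' := h.const_sub 1
  norm_num at h'
  exact h'

lemma cos_two_arctan (w : ℝ) : cos (2 * arctan w) = 2 / (1 + w ^ 2) - 1 := by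
  rw [cos_two_mul, cos_sq_arctan]
  ring

/-- A monotone front of `φ' = a (cos φ - cos t)` joining the equilibria `-t` and `t`. -/
lemma exists_front {a t : ℝ} (ha : 0 < a) (ht0 : 0 < t) (htpi : t < π) :
    ∃ φ : ℝ → ℝ, ContDiff ℝ 2 φ ∧ (∀ x, HasDerivAt φ (a * (cos (φ x) - cos t)) x) ∧
      StrictMono φ ∧ (∀ x, φ x ∈ Set.Ioo (-t) t) ∧
      Tendsto φ atBot (𝓝 (-t)) ∧ Tendsto φ atTop (𝓝 t) := by
  obtain ⟨T, hT⟩ : ∃ T, T = tan (t / 2) := ⟨_, rfl⟩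
  have hTpos : 0 < T := hT ▸ tan_pos_of_pos_of_lt_pi_div_two (by linarith) (by linarith)
  have harc : 2 * arctan T = t := by
    rw [hT, arctan_tan (by linarith) (by linarith)]
    ring
  have harc' : 2 * arctan (-T) = -t := by
    rw [arctan_neg]
    linarith
  -- The rate for which `T * tanh (k x)` solves the Riccati equation for `tan (φ / 2)`.
  obtain ⟨k, hk⟩ : ∃ k, k = a * T / (1 + T ^ 2) := ⟨_, rfl⟩
  have hkpos : 0 < k := by
    rw [hk]
    positivity
  refine ⟨fun x => 2 * arctan (T * tanhFront k x), ?_, ?_, ?_, ?_, ?_, ?_⟩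
  · exact contDiff_const.mul (contDiff_const.mul (tanhFront_contDiff k)).arctan
  · intro x
    refine ((((tanhFront_hasDerivAt k x).const_mul T).arctan).const_mul 2).congr_deriv ?_
    rw [cos_two_arctan, ← harc, cos_two_arctan, hk]
    generalize tanhFront (a * T / (1 + T ^ 2)) x = y
    field_simp
    ring
  · intro x y hxy
    have := arctan_strictMono (mul_lt_mul_of_pos_left (tanhFront_strictMono hkpos hxy) hTpos)
    simpa using this
  · intro x
    have l1 := arctan_strictMono (mul_lt_mul_of_pos_left (neg_one_lt_tanhFront k x) hTpos)
    have l2 := arctan_strictMono (mul_lt_mul_of_pos_left (tanhFront_lt_one k x) hTpos)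
    rw [mul_neg_one] at l1
    rw [mul_one] at l2
    constructor <;> dsimp only <;> linarith
  · have := ((continuous_arctan.tendsto _).comp
      ((tanhFront_tendsto_atBot hkpos).const_mul T)).const_mul 2
    rw [mul_neg_one, harc'] at this
    exact this
  · have := ((continuous_arctan.tendsto _).comp
      ((tanhFront_tendsto_atTop hkpos).const_mul T)).const_mul 2
    rw [mul_one, harc] at this
    exact this

/-- A solution of `φ' = a (cos φ - C)` solves `φ'' = -a² sin φ (cos φ - C)`. -/
lemma deriv_deriv_of_first_order {a C : ℝ} {φ : ℝ → ℝ}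
    (hφ : ∀ x, HasDerivAt φ (a * (cos (φ x) - C)) x) (x : ℝ) :
    deriv (deriv φ) x = -a ^ 2 * sin (φ x) * (cos (φ x) - C) := by
  have h1 : deriv φ = fun x => a * (cos (φ x) - C) := funext fun x => (hφ x).deriv
  rw [h1, ((((hφ x).cos).sub_const C).const_mul a).deriv]
  ring

lemma deriv_deriv_neg (f : ℝ → ℝ) (x : ℝ) :
    deriv (deriv fun y => -f y) x = -deriv (deriv f) x := by
  have h1 : (deriv fun y => -f y) = fun y => -deriv f y := funext fun y => deriv.fun_neg
  rw [h1, deriv.fun_neg]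

theorem stmt9 (h Ω μ : ℝ) (h1 : 0 < h - Ω) (h2 : h - Ω < μ) :
    ∀ θ₁ : ℝ, θ₁ = Real.arccos ((h - Ω) / μ) →
      θ₁ ∈ Set.Ioo 0 (Real.pi / 2) ∧
      ∃ θa θb : ℝ → ℝ,
        ContDiff ℝ 2 θa ∧ ContDiff ℝ 2 θb ∧
        (∀ ξ : ℝ, deriv (deriv θa) ξ = Real.sin (θa ξ) * (h - Ω - μ * Real.cos (θa ξ))) ∧
        (∀ ξ : ℝ, deriv (deriv θb) ξ = Real.sin (θb ξ) * (h - Ω - μ * Real.cos (θb ξ))) ∧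
        StrictMono θa ∧ StrictMono θb ∧
        -- heteroclinic crossing `ê₃`
        (∀ ξ : ℝ, θa ξ ∈ Set.Ioo (-θ₁) θ₁) ∧
        Filter.Tendsto θa Filter.atBot (nhds (-θ₁)) ∧
        Filter.Tendsto θa Filter.atTop (nhds θ₁) ∧
        -- heteroclinic crossing `−ê₃`
        (∀ ξ : ℝ, θb ξ ∈ Set.Ioo θ₁ (2 * Real.pi - θ₁)) ∧
        Filter.Tendsto θb Filter.atBot (nhds θ₁) ∧
        Filter.Tendsto θb Filter.atTop (nhds (2 * Real.pi - θ₁)) ∧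
        -- the reflections `−θa`, `−θb` are also solutions
        (∀ ξ : ℝ, deriv (deriv (fun x => -θa x)) ξ =
            Real.sin (-θa ξ) * (h - Ω - μ * Real.cos (-θa ξ))) ∧
        (∀ ξ : ℝ, deriv (deriv (fun x => -θb x)) ξ =
            Real.sin (-θb ξ) * (h - Ω - μ * Real.cos (-θb ξ))) := by
  intro θ₁ hθ
  have hμ : 0 < μ := h1.trans h2
  have hc0 : 0 < (h - Ω) / μ := div_pos h1 hμ
  have hc1 : (h - Ω) / μ < 1 := (div_lt_one hμ).2 h2
  have hpos : 0 < θ₁ := hθ ▸ arccos_pos.2 hc1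
  have hlt : θ₁ < π / 2 := hθ ▸ arccos_lt_pi_div_two.2 hc0
  have hcos : μ * cos θ₁ = h - Ω := by
    rw [hθ, cos_arccos (by linarith) hc1.le]
    field_simp
  have hsq : √μ ^ 2 = μ := sq_sqrt hμ.le
  obtain ⟨φ, φC, φd, φm, φr, φbot, φtop⟩ :=
    exists_front (sqrt_pos.2 hμ) hpos (by linarith [pi_pos])
  obtain ⟨ψ, ψC, ψd, ψm, ψr, ψbot, ψtop⟩ :=
    exists_front (t := π - θ₁) (sqrt_pos.2 hμ) (by linarith [pi_pos]) (by linarith)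
  have ea : ∀ ξ, deriv (deriv φ) ξ = sin (φ ξ) * (h - Ω - μ * cos (φ ξ)) := fun ξ => by
    rw [deriv_deriv_of_first_order φd, hsq, ← hcos]
    ring
  have eb : ∀ ξ, deriv (deriv fun x => π + ψ x) ξ =
      sin (π + ψ ξ) * (h - Ω - μ * cos (π + ψ ξ)) := fun ξ => by
    have hd : (deriv fun x => π + ψ x) = deriv ψ := funext fun y => by simp
    rw [hd, deriv_deriv_of_first_order ψd, hsq, ← hcos, cos_pi_sub, add_comm π, sin_add_pi,
      cos_add_pi]
    ring
  refine ⟨⟨hpos, hlt⟩, φ, fun x => π + ψ x, φC, contDiff_const.add ψC, ea, eb, φm,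
    fun x y hxy => add_lt_add_right (ψm hxy) π, φr, φbot, φtop, ?_, ?_, ?_, ?_, ?_⟩
  · intro ξ
    obtain ⟨l1, l2⟩ := ψr ξ
    constructor <;> dsimp only <;> linarith
  · have := ψbot.const_add π
    rwa [show π + -(π - θ₁) = θ₁ by ring] at this
  · have := ψtop.const_add π
    rwa [show π + (π - θ₁) = 2 * π - θ₁ by ring] at this
  · intro ξ
    rw [deriv_deriv_neg, ea, sin_neg, cos_neg]
    ring
  · intro ξ
    rw [deriv_deriv_neg, eb, sin_neg, cos_neg]
    ring
end

section
/- Let h, Ω, μ ∈ ℝ. (i) If h = Ω and μ < 0, then there exists a strictly increasing C² solution θ : ℝ → ℝ of θ″ = sin θ (h − Ω − μ cos θ) = −μ sin θ cos θ with lim_{ξ→−∞} θ(ξ) = 0 and lim_{ξ→+∞} θ(ξ) = π; i.e., a stationary coherent structure profile connecting ê₃ to −ê₃. (ii) If h ≠ Ω, then there is no C¹ solution θ : ℝ → ℝ of θ″ = sin θ (h − Ω − μ cos θ) with lim_{ξ→−∞} θ(ξ) = 0, lim_{ξ→+∞} θ(ξ) = π and lim_{ξ→±∞} θ′(ξ)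 = 0; i.e., the degenerate case h = Ω is the only possibility for a stationary homogeneous coherent structure profile to connect ê₃ and −ê₃. -/
/-!
Part (i) is explicit: with `k = √(-μ) > 0`, the profile `θ(ξ) = 2 arctan (exp (k ξ))` solves the
first-order equation `θ' = k sin θ`, and differentiating once more gives
`θ'' = k² sin θ cos θ = -μ sin θ cos θ`.

Part (ii) is conservation of energy: `θ'² / 2 + cos θ (h - Ω - (μ / 2) cos θ)` is constant along
solutions, while its limits at `∓∞` are `±(h - Ω) - μ / 2`; hence `h = Ω`.
-/

/-- The domain-wall profile satisfies the first-order equation `θ' = k sin θ`. -/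
lemma hasDerivAt_domainWall (k ξ : ℝ) :
    HasDerivAt (fun x : ℝ => 2 * Real.arctan (Real.exp (k * x)))
      (k * Real.sin (2 * Real.arctan (Real.exp (k * ξ)))) ξ := by
  have h1 : HasDerivAt (fun x : ℝ => k * x) k ξ := by
    simpa using (hasDerivAt_id ξ).const_mul k
  have h2 := (h1.exp.arctan).const_mul 2
  refine h2.congr_deriv ?_
  have hpos : (0 : ℝ) < 1 + Real.exp (k * ξ) ^ 2 := by positivity
  have hs : Real.sqrt (1 + Real.exp (k * ξ) ^ 2) ^ 2 = 1 + Real.exp (k * ξ) ^ 2 :=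
    Real.sq_sqrt hpos.le
  have hs0 : Real.sqrt (1 + Real.exp (k * ξ) ^ 2) ≠ 0 := (Real.sqrt_pos.mpr hpos).ne'
  rw [Real.sin_two_mul, Real.sin_arctan, Real.cos_arctan]
  field_simp
  rw [hs]

theorem stmt11 (h Ω μ : ℝ) :
    -- (i) the degenerate case `h = Ω`, `μ < 0`: a domain wall connecting `ê₃` to `−ê₃`
    ((h = Ω ∧ μ < 0) →
      ∃ θ : ℝ → ℝ, ContDiff ℝ 2 θ ∧ StrictMono θ ∧
        (∀ ξ : ℝ, deriv (deriv θ) ξ = Real.sin (θ ξ) * (h - Ω - μ * Real.cos (θ ξ))) ∧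
        Filter.Tendsto θ Filter.atBot (nhds 0) ∧
        Filter.Tendsto θ Filter.atTop (nhds Real.pi)) ∧
    -- (ii) for `h ≠ Ω` no such connecting profile exists
    (h ≠ Ω →
      ∀ θ θ' : ℝ → ℝ,
        (∀ ξ : ℝ, HasDerivAt θ (θ' ξ) ξ) →
        (∀ ξ : ℝ, HasDerivAt θ' (Real.sin (θ ξ) * (h - Ω - μ * Real.cos (θ ξ))) ξ) →
        Filter.Tendsto θ Filter.atBot (nhds 0) →
        Filter.Tendsto θ Filter.atTop (nhds Real.pi) →
        Filter.Tendsto θ' Filter.atBot (nhds 0) →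
        Filter.Tendsto θ' Filter.atTop (nhds 0) → False) := by
  constructor
  · rintro ⟨rfl, hμ⟩
    set k := Real.sqrt (-μ) with hk
    have hk0 : 0 < k := Real.sqrt_pos.mpr (by linarith)
    have hk2 : k * k = -μ := Real.mul_self_sqrt (by linarith)
    have hd := hasDerivAt_domainWall k
    refine ⟨fun x => 2 * Real.arctan (Real.exp (k * x)), ?_, ?_, ?_, ?_, ?_⟩
    · exact contDiff_const.mul
        (Real.contDiff_arctan.comp (Real.contDiff_exp.comp (contDiff_const.mul contDiff_id)))
    · intro a b hab
      have h1 : Real.exp (k * a) < Real.exp (k * b) :=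
        Real.exp_lt_exp.mpr (mul_lt_mul_of_pos_left hab hk0)
      have h2 := Real.arctan_strictMono h1
      simpa using h2
    · intro ξ
      rw [funext fun x => (hd x).deriv, ((hd ξ).sin.const_mul k).deriv]
      linear_combination Real.cos (2 * Real.arctan (Real.exp (k * ξ))) *
        Real.sin (2 * Real.arctan (Real.exp (k * ξ))) * hk2
    · have h1 : Filter.Tendsto (fun x : ℝ => Real.exp (k * x)) Filter.atBot (nhds 0) :=
        Real.tendsto_exp_atBot.comp (Filter.tendsto_id.const_mul_atBot hk0)
      simpa using ((Real.continuous_arctan.tendsto 0).comp h1).const_mul 2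
    · have h1 : Filter.Tendsto (fun x : ℝ => Real.exp (k * x)) Filter.atTop Filter.atTop :=
        Real.tendsto_exp_atTop.comp (Filter.tendsto_id.const_mul_atTop hk0)
      have h2 := ((Real.tendsto_arctan_atTop.mono_right nhdsWithin_le_nhds).comp h1).const_mul 2
      rwa [mul_div_cancel₀ _ (two_ne_zero)] at h2
  · intro hne θ θ' hθ hθ' hbot htop hbot' htop'
    set E : ℝ → ℝ := fun x =>
      θ' x ^ 2 / 2 + Real.cos (θ x) * (h - Ω - μ / 2 * Real.cos (θ x)) with hE
    have hEd : ∀ x, HasDerivAt E 0 x := by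
      intro x
      refine HasDerivAt.congr_deriv ((((hθ' x).pow 2).div_const 2).add
        ((hθ x).cos.mul (((hθ x).cos.const_mul (μ / 2)).const_sub (h - Ω)))) ?_
      push_cast
      ring
    have hconst : ∀ x, E x = E 0 := fun x =>
      is_const_of_deriv_eq_zero (fun y => (hEd y).differentiableAt) (fun y => (hEd y).deriv) x 0
    have hlim : ∀ (l : Filter ℝ) [l.NeBot] (a : ℝ), Filter.Tendsto θ l (nhds a) →
        Filter.Tendsto θ' l (nhds 0) →
        E 0 = Real.cos a * (h - Ω - μ / 2 * Real.cos a) := by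
      intro l _ a ha ha'
      have hc := (Real.continuous_cos.tendsto a).comp ha
      have h1 : Filter.Tendsto E l
          (nhds ((0 : ℝ) ^ 2 / 2 + Real.cos a * (h - Ω - μ / 2 * Real.cos a))) :=
        ((ha'.pow 2).div_const 2).add (hc.mul ((hc.const_mul (μ / 2)).const_sub (h - Ω)))
      rw [funext hconst] at h1
      simpa using tendsto_nhds_unique tendsto_const_nhds h1
    have e1 := hlim _ _ hbot hbot'
    have e2 := hlim _ _ htop htop'
    rw [Real.cos_zero] at e1
    rw [Real.cos_pi] at e2
    exact hne (by linarith)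
end

section
/- Let α > 0, β, h, μ ∈ ℝ and Ω = β/α. Suppose θ : I → ℝ is C² and q : I → ℝ is C¹ on an interval I, with sin θ(ξ) ≠ 0 for all ξ ∈ I, and they satisfy the stationary coherent structure system θ″ = sin θ (h − Ω + (q² − μ) cos θ) and q′ = (αΩ − β) − 2 (cos θ / sin θ) θ′ q (note αΩ − β = 0 here). Then the function ξ ↦ q(ξ) sin²θ(ξ) is constant on I; i.e., C = q sin²θ is a first integral. -/
/-!
Since `α * Ω = β`, the wavenumber equation reads `dq/dξ = -2 (cos θ / sin θ) p q` with
`p = dθ/dξ`. By the product rule the derivative of `q sin² θ` is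
`(dq/dξ) sin² θ + 2 q p sin θ cos θ = 0` (using `sin θ ≠ 0`), and a function with vanishing
derivative on an open preconnected set is constant there.
-/

theorem stmt12 (α β h μ Ω : ℝ) (hα : 0 < α) (hΩ : Ω = β / α)
    (I : Set ℝ) (hI : IsOpen I) (hconn : IsPreconnected I)
    (θ p q : ℝ → ℝ)
    (hsin : ∀ ξ ∈ I, Real.sin (θ ξ) ≠ 0)
    (hθ : ∀ ξ ∈ I, HasDerivAt θ (p ξ) ξ)
    (hp : ∀ ξ ∈ I, HasDerivAt p
        (Real.sin (θ ξ) * (h - Ω + ((q ξ) ^ 2 - μ) * Real.cos (θ ξ))) ξ)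
    (hq : ∀ ξ ∈ I, HasDerivAt q
        ((α * Ω - β) - 2 * (Real.cos (θ ξ) / Real.sin (θ ξ)) * p ξ * q ξ) ξ) :
    ∀ ξ₁ ∈ I, ∀ ξ₂ ∈ I,
      q ξ₁ * (Real.sin (θ ξ₁)) ^ 2 = q ξ₂ * (Real.sin (θ ξ₂)) ^ 2 := by
  have hzero : α * Ω - β = 0 := by
    rw [hΩ]
    field_simp
    ring
  have hderiv : ∀ ξ ∈ I, HasDerivAt (fun x => q x * (Real.sin (θ x)) ^ 2) 0 ξ := by
    intro ξ hξ
    have hs := hsin ξ hξ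
    refine ((hq ξ hξ).fun_mul ((hθ ξ hξ).sin.fun_pow 2)).congr_deriv ?_
    rw [hzero]
    field_simp
    ring
  intro ξ₁ h₁ ξ₂ h₂
  exact hI.is_const_of_deriv_eq_zero hconn
    (fun x hx => (hderiv x hx).differentiableAt.differentiableWithinAt)
    (fun x hx => (hderiv x hx).deriv) h₁ h₂
end

section
/- Let h, Ω, μ ∈ ℝ and C ∈ ℝ with C ≠ 0, and consider the reduced stationary coherent structure equation θ″ = sin θ (h − Ω − μ cos θ) + C² cos θ / sin³θ on the region sin θ ≠ 0, with singular potential P(θ) = cos θ (h − Ω − (μ/2) cos θ) + (C²/2) cot²θ (so that θ″ = −P′(θ)). Then: (i) along every C² solution the energy E = (θ′)²/2 + P(θ) is constant; (ii) every maximal solution with θ(0) ∈ (0, π) is defined on all of ℝ and satisfies θ(ξ) ∈ (0, π) for all ξ ∈ ℝ — indeed θ remains in a compact subinterval of (0, π). In particular, profiles with nonzero local wavenumber can never pass through ±ê₃. -/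
/-!
The energy `(θ′)²/2 + P(θ)` has zero derivative along solutions because `θ″ = −P′(θ)`. On `(0, π)`
the regular part of `P` is bounded below, while the barrier `(C²/2) cot²θ` blows up at `0` and `π`.
Hence an energy bound yields `s > 0` with `s ≤ θ ≤ π − s`, and a bound `V` on `|θ′|`
(`energy_sublevel_bounds`).

A solution on a preconnected open set is confined to this box by a continuity argument: the set of
times at which `θ ∈ (0, π)` and the energy has its initial value is both open and closed in the
domain. The confinement lemma `confinement` requires the equation only while `(θ, θ′)` stays in a
slightly larger box. It therefore applies also to the solutions of a truncated first-order system,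
whose field is bounded and globally Lipschitz and agrees with the original one on the larger box.
The truncated system has global solutions (`exists_global_solution`), and by confinement these
solve the original equation on all of `ℝ`.
-/

/-- The singular potential `P(θ) = cos θ (h − Ω − (μ/2) cos θ) + (C²/2) cot²θ` of the reduced
stationary coherent structure equation. -/
noncomputable def Ppot (h Ω μ C : ℝ) (t : ℝ) : ℝ :=
  Real.cos t * (h - Ω - μ / 2 * Real.cos t) + C ^ 2 / 2 * (Real.cos t / Real.sin t) ^ 2

/-- The right-hand side `sin θ (h − Ω − μ cos θ) + C² cos θ / sin³θ` of the reduced stationary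
coherent structure equation `θ″ = −P′(θ)`. -/
noncomputable def redRHS (h Ω μ C : ℝ) (t : ℝ) : ℝ :=
  Real.sin t * (h - Ω - μ * Real.cos t) + C ^ 2 * Real.cos t / (Real.sin t) ^ 3

open Set Filter Topology

theorem hasDerivAt_Ppot (h Ω μ C t : ℝ) (ht : Real.sin t ≠ 0) :
    HasDerivAt (Ppot h Ω μ C) (-(redRHS h Ω μ C t)) t := by
  have hc := Real.hasDerivAt_cos t
  have hs := Real.hasDerivAt_sin t
  have h1 := (hc.mul ((hc.const_mul (μ / 2)).const_sub (h - Ω))).add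
    (((hc.div hs ht).pow 2).const_mul (C ^ 2 / 2))
  refine h1.congr_deriv ?_
  have hsc := Real.sin_sq_add_cos_sq t
  have hq : (-Real.sin t * Real.sin t - Real.cos t * Real.cos t) = -1 := by linarith
  simp only [redRHS, Pi.div_apply, hq, Nat.add_one_sub_one, pow_one, Nat.cast_ofNat]
  field_simp
  ring

theorem energy_const (h Ω μ C : ℝ) (I : Set ℝ) (θ θ' : ℝ → ℝ) (hI : IsOpen I)
    (hI' : IsPreconnected I) (hsin : ∀ ξ ∈ I, Real.sin (θ ξ) ≠ 0)
    (h1 : ∀ ξ ∈ I, HasDerivAt θ (θ' ξ) ξ)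
    (h2 : ∀ ξ ∈ I, HasDerivAt θ' (redRHS h Ω μ C (θ ξ)) ξ) :
    ∀ ξ₁ ∈ I, ∀ ξ₂ ∈ I, (θ' ξ₁) ^ 2 / 2 + Ppot h Ω μ C (θ ξ₁) =
      (θ' ξ₂) ^ 2 / 2 + Ppot h Ω μ C (θ ξ₂) := by
  have hd : ∀ ξ ∈ I, HasDerivAt (fun ξ => (θ' ξ) ^ 2 / 2 + Ppot h Ω μ C (θ ξ)) 0 ξ := by
    intro ξ hξ
    have := (((h2 ξ hξ).pow 2).div_const 2).add
      ((hasDerivAt_Ppot h Ω μ C (θ ξ) (hsin ξ hξ)).comp ξ (h1 ξ hξ))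
    refine this.congr_deriv ?_
    norm_num
    ring
  intro ξ₁ hξ₁ ξ₂ hξ₂
  exact hI.is_const_of_deriv_eq_zero hI'
    (fun ξ hξ => (hd ξ hξ).differentiableAt.differentiableWithinAt)
    (fun ξ hξ => (hd ξ hξ).deriv) hξ₁ hξ₂

/-- The singular barriers turn an energy bound into bounds on `θ` and `θ′`. -/
theorem energy_sublevel_bounds (h Ω μ C E : ℝ) (hC : C ≠ 0) :
    ∃ s V : ℝ, 0 < s ∧ 0 ≤ V ∧ ∀ t v : ℝ, t ∈ Ioo 0 Real.pi →
      v ^ 2 / 2 + Ppot h Ω μ C t ≤ E → t ∈ Icc s (Real.pi - s) ∧ |v| ≤ V := by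
  -- `-(|h - Ω| + |μ| / 2)` bounds the regular part of `P` from below, so `N` bounds both
  -- `v ^ 2 / 2` and the barrier term.
  set N : ℝ := max (E + |h - Ω| + |μ| / 2) 0 with hN
  have hN0 : 0 ≤ N := le_max_right _ _
  have hC2 : 0 < C ^ 2 := by positivity
  set K : ℝ := 2 * N / C ^ 2 with hK
  have hK0 : 0 ≤ K := by positivity
  refine ⟨1 / (K + 1), Real.sqrt (2 * N), by positivity, Real.sqrt_nonneg _, ?_⟩
  intro t v ht hE
  have hsin : 0 < Real.sin t := Real.sin_pos_of_mem_Ioo ht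
  have hreg : -(|h - Ω| + |μ| / 2) ≤ Real.cos t * (h - Ω - μ / 2 * Real.cos t) := by
    have a1 : |Real.cos t * (h - Ω)| ≤ |h - Ω| := by
      rw [abs_mul]
      exact mul_le_of_le_one_left (abs_nonneg _) (Real.abs_cos_le_one t)
    have a2 : |μ * Real.cos t ^ 2| ≤ |μ| := by
      rw [abs_mul, abs_of_nonneg (sq_nonneg (Real.cos t))]
      exact mul_le_of_le_one_right (abs_nonneg _) (Real.cos_sq_le_one t)
    have := neg_abs_le (Real.cos t * (h - Ω))
    have := le_abs_self (μ * Real.cos t ^ 2)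
    nlinarith
  have hNE : E + |h - Ω| + |μ| / 2 ≤ N := le_max_left _ _
  unfold Ppot at hE
  have hcot : 0 ≤ C ^ 2 / 2 * (Real.cos t / Real.sin t) ^ 2 := by positivity
  have hv2 : v ^ 2 ≤ 2 * N := by linarith
  have hcot2 : (Real.cos t / Real.sin t) ^ 2 ≤ K := by
    rw [hK, le_div_iff₀ hC2]
    nlinarith [sq_nonneg v]
  have hsK : 1 / (K + 1) ≤ Real.sin t := by
    rw [div_pow, div_le_iff₀ (by positivity)] at hcot2
    have h1 := Real.sin_sq_add_cos_sq t
    have h2 : 1 ≤ (K + 1) * Real.sin t ^ 2 := by linarith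
    have h3 : Real.sin t ^ 2 ≤ Real.sin t := by nlinarith [Real.sin_le_one t]
    rw [div_le_iff₀ (by positivity)]
    nlinarith
  refine ⟨⟨?_, ?_⟩, Real.abs_le_sqrt hv2⟩
  · exact hsK.trans (Real.sin_le ht.1.le)
  · have := Real.sin_le (x := Real.pi - t) (by linarith [ht.2])
    rw [Real.sin_pi_sub] at this
    linarith

theorem continuousAt_Ppot (h Ω μ C t : ℝ) (ht : t ∈ Ioo 0 Real.pi) :
    ContinuousAt (Ppot h Ω μ C) t :=
  (hasDerivAt_Ppot h Ω μ C t (Real.sin_pos_of_mem_Ioo ht).ne').continuousAt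

/-- Confinement by energy. The equation is assumed only at times where `(θ, v)` lies in the box
`(s/2, π − s/2) × (−V−1, V+1)`, so that solutions of a system truncated outside this box
are covered. -/
theorem confinement (h Ω μ C : ℝ) (hC : C ≠ 0) (θ₀ v₀ : ℝ) (hθ₀ : θ₀ ∈ Ioo 0 Real.pi) :
    ∃ s V : ℝ, 0 < s ∧ 0 ≤ V ∧ s ≤ Real.pi - s ∧
      ∀ (I : Set ℝ) (θ v : ℝ → ℝ), IsOpen I → IsPreconnected I → (0 : ℝ) ∈ I →
        θ 0 = θ₀ → v 0 = v₀ → (∀ ξ ∈ I, ContinuousAt θ ξ) → (∀ ξ ∈ I, ContinuousAt v ξ) →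
        (∀ ξ ∈ I, θ ξ ∈ Ioo (s / 2) (Real.pi - s / 2) → |v ξ| < V + 1 →
          HasDerivAt θ (v ξ) ξ ∧ HasDerivAt v (redRHS h Ω μ C (θ ξ)) ξ) →
        ∀ ξ ∈ I, θ ξ ∈ Icc s (Real.pi - s) ∧ |v ξ| ≤ V := by
  set E := v₀ ^ 2 / 2 + Ppot h Ω μ C θ₀ with hE
  obtain ⟨s, V, hs, hV, hb⟩ := energy_sublevel_bounds h Ω μ C E hC
  have hs' : s ≤ Real.pi - s := by
    have := (hb θ₀ v₀ hθ₀ le_rfl).1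
    exact this.1.trans this.2
  refine ⟨s, V, hs, hV, hs', ?_⟩
  intro I θ v hI hI' h0 hθ0 hv0 hcθ hcv hode
  set A : Set ℝ := {ξ | ξ ∈ I ∧ θ ξ ∈ Ioo 0 Real.pi ∧
    (v ξ) ^ 2 / 2 + Ppot h Ω μ C (θ ξ) = E} with hA
  have hAb : ∀ ξ ∈ A, θ ξ ∈ Icc s (Real.pi - s) ∧ |v ξ| ≤ V :=
    fun ξ hξ => hb _ _ hξ.2.1 hξ.2.2.le
  have hAopen : IsOpen A := by
    rw [Metric.isOpen_iff]
    intro p hp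
    obtain ⟨hpθ, hpv⟩ := hAb p hp
    have e1 : ∀ᶠ ξ in 𝓝 p, ξ ∈ I := hI.mem_nhds hp.1
    have e2 : ∀ᶠ ξ in 𝓝 p, θ ξ ∈ Ioo (s / 2) (Real.pi - s / 2) :=
      (hcθ p hp.1).eventually_mem (isOpen_Ioo.mem_nhds ⟨by linarith [hpθ.1], by linarith [hpθ.2]⟩)
    have e3 : ∀ᶠ ξ in 𝓝 p, |v ξ| < V + 1 :=
      (hcv p hp.1).abs.eventually_lt continuousAt_const (by linarith)
    obtain ⟨ε, hε, hball⟩ := Metric.eventually_nhds_iff_ball.1 (e1.and (e2.and e3))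
    refine ⟨ε, hε, fun ξ hξ => ?_⟩
    have hin : ∀ ξ ∈ Metric.ball p ε, θ ξ ∈ Ioo 0 Real.pi := fun ξ hξ =>
      ⟨by linarith [(hball ξ hξ).2.1.1], by linarith [(hball ξ hξ).2.1.2]⟩
    have hder : ∀ ξ ∈ Metric.ball p ε,
        HasDerivAt θ (v ξ) ξ ∧ HasDerivAt v (redRHS h Ω μ C (θ ξ)) ξ := fun ξ hξ =>
      hode ξ (hball ξ hξ).1 (hball ξ hξ).2.1 (hball ξ hξ).2.2
    refine ⟨(hball ξ hξ).1, hin ξ hξ, ?_⟩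
    rw [energy_const h Ω μ C (Metric.ball p ε) θ v Metric.isOpen_ball
      (convex_ball p ε).isPreconnected (fun x hx => (Real.sin_pos_of_mem_Ioo (hin x hx)).ne')
      (fun x hx => (hder x hx).1) (fun x hx => (hder x hx).2) ξ hξ p (Metric.mem_ball_self hε)]
    exact hp.2.2
  have hclosed : closure A ∩ I ⊆ A := by
    rintro p ⟨hpA, hpI⟩
    have hθp : θ p ∈ Icc s (Real.pi - s) := by
      have := (hcθ p hpI).continuousWithinAt.mem_closure hpA (fun ξ hξ => (hAb ξ hξ).1)
      rwa [isClosed_Icc.closure_eq] at this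
    have hin : θ p ∈ Ioo 0 Real.pi := ⟨by linarith [hθp.1], by linarith [hθp.2]⟩
    refine ⟨hpI, hin, ?_⟩
    have hcE : ContinuousAt (fun ξ => (v ξ) ^ 2 / 2 + Ppot h Ω μ C (θ ξ)) p :=
      (((hcv p hpI).pow 2).div_const 2).add
        (ContinuousAt.comp (continuousAt_Ppot h Ω μ C _ hin) (hcθ p hpI))
    have := hcE.continuousWithinAt.mem_closure (t := {E}) hpA (fun ξ hξ => hξ.2.2)
    simpa using this
  have hsub : I ⊆ A := hI'.subset_of_closure_inter_subset hAopen
    ⟨0, h0, h0, by rw [hθ0]; exact hθ₀, by rw [hθ0, hv0]⟩ hclosed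
  exact fun ξ hξ => hAb ξ (hsub hξ)

/-- A bounded, globally Lipschitz autonomous field has a global solution through every point:
boundedness gives Picard–Lindelöf on every interval `[-n, n]`, and uniqueness makes these solutions
agree on overlaps. -/
theorem exists_global_solution {X : Type*} [NormedAddCommGroup X] [NormedSpace ℝ X]
    [CompleteSpace X] (f : X → X) (K L : NNReal) (hf : LipschitzWith K f)
    (hL : ∀ x, ‖f x‖ ≤ L) (x₀ : X) :
    ∃ α : ℝ → X, α 0 = x₀ ∧ ∀ t, HasDerivAt α (f (α t)) t := by
  have key : ∀ n : ℕ, ∃ α : ℝ → X, α 0 = x₀ ∧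
      ∀ t ∈ Ioo (-(n : ℝ)) n, HasDerivAt α (f (α t)) t := by
    intro n
    have hn : (0 : ℝ) ≤ n := n.cast_nonneg
    have hPL : IsPicardLindelof (fun _ => f) (tmin := -(n : ℝ)) (tmax := n)
        ⟨0, by simp⟩ x₀ (L * n) 0 L K :=
      IsPicardLindelof.of_time_independent (fun x _ => hL x) hf.lipschitzOnWith (by simp)
    obtain ⟨α, h0, hα⟩ := hPL.exists_eq_forall_mem_Icc_hasDerivWithinAt₀
    exact ⟨α, h0, fun t ht =>
      (hα t (Ioo_subset_Icc_self ht)).hasDerivAt (Icc_mem_nhds ht.1 ht.2)⟩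
  choose α h0 hα using key
  have huniq : ∀ m n : ℕ, 0 < m → m ≤ n → EqOn (α m) (α n) (Ioo (-(m : ℝ)) m) := by
    intro m n hm hmn
    have hm' : (0 : ℝ) < m := by exact_mod_cast hm
    have hmn' : (m : ℝ) ≤ n := by exact_mod_cast hmn
    refine ODE_solution_unique_of_mem_Ioo (v := fun _ => f) (s := fun _ => univ) (K := K)
      (t₀ := 0) (fun _ _ => hf.lipschitzOnWith) ⟨by linarith, hm'⟩
      (fun t ht => ⟨hα m t ht, trivial⟩)
      (fun t ht => ⟨hα n t ⟨by linarith [ht.1], by linarith [ht.2]⟩, trivial⟩)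
      (by rw [h0, h0])
  -- Any index beyond `|t|` determines the same value at `t`.
  have heq : ∀ n : ℕ, ∀ t ∈ Ioo (-(n : ℝ)) n, α (⌊|t|⌋₊ + 1) t = α n t := by
    intro n t ht
    have hlt : |t| < n := abs_lt.2 ht
    have hle : ⌊|t|⌋₊ + 1 ≤ n := (Nat.floor_lt (abs_nonneg t)).2 hlt
    refine huniq _ n (Nat.succ_pos _) hle ?_
    rw [mem_Ioo, ← abs_lt]
    push_cast
    exact Nat.lt_floor_add_one _
  refine ⟨fun t => α (⌊|t|⌋₊ + 1) t, h0 _, fun t => ?_⟩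
  obtain ⟨n, hn⟩ := exists_nat_gt |t|
  have ht : t ∈ Ioo (-(n : ℝ)) n := abs_lt.1 hn
  have hd := hα n t ht
  rw [← heq n t ht] at hd
  exact hd.congr_of_eventuallyEq
    (eventually_of_mem (Ioo_mem_nhds ht.1 ht.2) (fun x hx => heq n x hx))

theorem redRHS_contDiffAt (h Ω μ C t : ℝ) (ht : Real.sin t ≠ 0) :
    ContDiffAt ℝ 1 (redRHS h Ω μ C) t := by
  unfold redRHS
  have hs : ContDiffAt ℝ 1 Real.sin t := Real.contDiff_sin.contDiffAt
  have hc : ContDiffAt ℝ 1 Real.cos t := Real.contDiff_cos.contDiffAt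
  exact (hs.mul (contDiffAt_const.sub (contDiffAt_const.mul hc))).add
    ((contDiffAt_const.mul hc).div (hs.pow 3) (pow_ne_zero 3 ht))

/-- Truncating `redRHS` outside a compact subinterval of `(0, π)` gives a bounded Lipschitz
function. -/
theorem exists_truncation (h Ω μ C a b : ℝ) (ha : 0 < a) (hab : a ≤ b) (hb : b < Real.pi) :
    ∃ (F : ℝ → ℝ) (K B : NNReal), LipschitzWith K F ∧ (∀ t, ‖F t‖ ≤ B) ∧
      ∀ t ∈ Icc a b, F t = redRHS h Ω μ C t := by
  have hcd : ∀ t ∈ Icc a b, ContDiffAt ℝ 1 (redRHS h Ω μ C) t := fun t ht =>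
    redRHS_contDiffAt h Ω μ C t
      (Real.sin_pos_of_mem_Ioo ⟨by linarith [ht.1], by linarith [ht.2]⟩).ne'
  have hloc : LocallyLipschitzOn (Icc a b) (redRHS h Ω μ C) := fun t ht =>
    (hcd t ht).contDiffWithinAt.exists_lipschitzOnWith (convex_Icc a b)
  obtain ⟨K, hK⟩ := hloc.exists_lipschitzOnWith_of_compact isCompact_Icc
  obtain ⟨B, hB⟩ := isCompact_Icc.exists_bound_of_continuousOn hK.continuousOn
  refine ⟨fun t => redRHS h Ω μ C (projIcc a b hab t), K, B.toNNReal, ?_, ?_, ?_⟩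
  · have := (lipschitzOnWith_iff_restrict.1 hK).comp (LipschitzWith.projIcc hab)
    simpa using! this
  · exact fun t => (hB _ (projIcc a b hab t).2).trans (Real.le_coe_toNNReal B)
  · intro t ht
    simp [projIcc_of_mem hab ht]

/-- Solutions of the truncated system `θ′ = clamp v`, `v′ = F θ` never leave the region
where truncation has no effect. -/
theorem global_existence (h Ω μ C : ℝ) (hC : C ≠ 0) (θ₀ : ℝ) (hθ₀ : θ₀ ∈ Ioo 0 Real.pi)
    (v₀ : ℝ) :
    ∃ θ : ℝ → ℝ, ContDiff ℝ 2 θ ∧ θ 0 = θ₀ ∧ deriv θ 0 = v₀ ∧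
      (∀ ξ : ℝ, deriv (deriv θ) ξ = redRHS h Ω μ C (θ ξ)) ∧
      ∃ a b : ℝ, 0 < a ∧ b < Real.pi ∧ ∀ ξ : ℝ, θ ξ ∈ Icc a b := by
  obtain ⟨s, V, hs, hV, hss, hconf⟩ := confinement h Ω μ C hC θ₀ v₀ hθ₀
  obtain ⟨F, K, B, hFK, hFB, hF⟩ := exists_truncation h Ω μ C (s / 2) (Real.pi - s / 2)
    (by linarith) (by linarith) (by linarith)
  have hVV : -(V + 1) ≤ V + 1 := by linarith
  set G : ℝ → ℝ := fun v => projIcc (-(V + 1)) (V + 1) hVV v with hG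
  have hGL : LipschitzWith 1 G := by
    have := (LipschitzWith.subtype_val (Icc (-(V + 1)) (V + 1))).comp (LipschitzWith.projIcc hVV)
    simpa using! this
  have hGB : ∀ v, ‖G v‖ ≤ (V + 1).toNNReal := fun v =>
    (abs_le.2 (projIcc (-(V + 1)) (V + 1) hVV v).2).trans (Real.le_coe_toNNReal _)
  have hfL := (hGL.comp (LipschitzWith.prod_snd (α := ℝ) (β := ℝ))).prodMk
    (hFK.comp (LipschitzWith.prod_fst (α := ℝ) (β := ℝ)))
  obtain ⟨α, hα0, hα⟩ := exists_global_solution (fun x : ℝ × ℝ => (G x.2, F x.1)) _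
    (max (V + 1).toNNReal B) hfL
    (fun x => by
      rw [Prod.norm_def, NNReal.coe_max]
      exact max_le_max (hGB _) (hFB _)) (θ₀, v₀)
  have d1 : ∀ t, HasDerivAt (fun t => (α t).1) (G (α t).2) t := fun t => (hα t).fst
  have d2 : ∀ t, HasDerivAt (fun t => (α t).2) (F (α t).1) t := fun t => (hα t).snd
  have hGv : ∀ v, |v| < V + 1 → G v = v := fun v hv => by
    simp [hG, projIcc_of_mem hVV (abs_le.1 hv.le)]
  have hode : ∀ ξ, (α ξ).1 ∈ Ioo (s / 2) (Real.pi - s / 2) → |(α ξ).2| < V + 1 →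
      HasDerivAt (fun t => (α t).1) (α ξ).2 ξ ∧
        HasDerivAt (fun t => (α t).2) (redRHS h Ω μ C (α ξ).1) ξ := by
    intro ξ hξ hv
    refine ⟨?_, ?_⟩
    · simpa only [hGv _ hv] using d1 ξ
    · rw [← hF _ (Ioo_subset_Icc_self hξ)]
      exact d2 ξ
  have hbox : ∀ ξ, (α ξ).1 ∈ Icc s (Real.pi - s) ∧ |(α ξ).2| ≤ V := fun ξ =>
    hconf univ (fun t => (α t).1) (fun t => (α t).2) isOpen_univ isPreconnected_univ trivial
      (by simp [hα0]) (by simp [hα0]) (fun t _ => (d1 t).continuousAt)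
      (fun t _ => (d2 t).continuousAt) (fun t _ => hode t) ξ trivial
  have hsol := fun ξ => hode ξ ⟨by linarith [(hbox ξ).1.1], by linarith [(hbox ξ).1.2]⟩
    (by linarith [(hbox ξ).2])
  have hder : deriv (fun t => (α t).1) = fun t => (α t).2 := funext fun t => (hsol t).1.deriv
  have hder2 : deriv (fun t => (α t).2) = fun t => F (α t).1 := funext fun t => (d2 t).deriv
  refine ⟨fun t => (α t).1, ?_, by simp [hα0], by rw [hder]; simp [hα0], ?_, s, Real.pi - s, hs,
    by linarith, fun ξ => (hbox ξ).1⟩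
  · have hC1 : ContDiff ℝ 1 (fun t => (α t).2) := by
      rw [contDiff_one_iff_deriv, hder2]
      exact ⟨fun t => (d2 t).differentiableAt,
        hFK.continuous.comp (continuous_iff_continuousAt.2 fun t => (d1 t).continuousAt)⟩
    rw [show (2 : WithTop ℕ∞) = 1 + 1 by norm_num, contDiff_succ_iff_deriv, hder]
    exact ⟨fun t => (d1 t).differentiableAt, by simp, hC1⟩
  · intro ξ
    rw [hder]
    exact (hsol ξ).2.deriv

theorem stmt13 (h Ω μ C : ℝ) (hC : C ≠ 0) :
    -- the equation has the form `θ″ = −P′(θ)` on the region `sin θ ≠ 0`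
    (∀ t : ℝ, Real.sin t ≠ 0 → HasDerivAt (Ppot h Ω μ C) (-(redRHS h Ω μ C t)) t) ∧
    -- (i) energy conservation along solutions
    (∀ (I : Set ℝ) (θ θ' : ℝ → ℝ), IsOpen I → IsPreconnected I →
        (∀ ξ ∈ I, Real.sin (θ ξ) ≠ 0) →
        (∀ ξ ∈ I, HasDerivAt θ (θ' ξ) ξ) →
        (∀ ξ ∈ I, HasDerivAt θ' (redRHS h Ω μ C (θ ξ)) ξ) →
        ∀ ξ₁ ∈ I, ∀ ξ₂ ∈ I,
          (θ' ξ₁) ^ 2 / 2 + Ppot h Ω μ C (θ ξ₁) =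
            (θ' ξ₂) ^ 2 / 2 + Ppot h Ω μ C (θ ξ₂)) ∧
    -- (ii) confinement: solutions starting in `(0, π)` stay in a compact subinterval of `(0, π)`
    (∀ (I : Set ℝ) (θ θ' : ℝ → ℝ), IsOpen I → IsPreconnected I → (0 : ℝ) ∈ I →
        θ 0 ∈ Set.Ioo 0 Real.pi →
        (∀ ξ ∈ I, HasDerivAt θ (θ' ξ) ξ) →
        (∀ ξ ∈ I, HasDerivAt θ' (redRHS h Ω μ C (θ ξ)) ξ) →
        ∃ a b : ℝ, 0 < a ∧ b < Real.pi ∧ ∀ ξ ∈ I, θ ξ ∈ Set.Icc a b) ∧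
    -- (ii) global existence: every initial condition in `(0, π)` has a solution on all of `ℝ`
    (∀ θ₀ ∈ Set.Ioo (0 : ℝ) Real.pi, ∀ v₀ : ℝ,
        ∃ θ : ℝ → ℝ, ContDiff ℝ 2 θ ∧ θ 0 = θ₀ ∧ deriv θ 0 = v₀ ∧
          (∀ ξ : ℝ, deriv (deriv θ) ξ = redRHS h Ω μ C (θ ξ)) ∧
          ∃ a b : ℝ, 0 < a ∧ b < Real.pi ∧ ∀ ξ : ℝ, θ ξ ∈ Set.Icc a b) := by
  refine ⟨hasDerivAt_Ppot h Ω μ C, energy_const h Ω μ C, ?_, global_existence h Ω μ C hC⟩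
  intro I θ θ' hI hI' h0 hθ0 h1 h2
  obtain ⟨s, V, hs, -, -, hconf⟩ := confinement h Ω μ C hC (θ 0) (θ' 0) hθ0
  exact ⟨s, Real.pi - s, hs, by linarith, fun ξ hξ =>
    (hconf I θ θ' hI hI' h0 rfl rfl (fun t ht => (h1 t ht).continuousAt)
      (fun t ht => (h2 t ht).continuousAt) (fun t ht _ _ => ⟨h1 t ht, h2 t ht⟩) ξ hξ).1⟩
end

section
/- Let α > 0 and β, h, μ, Ω ∈ ℝ with Ω ≠ β/α. Suppose θ : I → ℝ is C², q : I → ℝ is C¹ on an interval I with sin θ(ξ) ≠ 0 for all ξ ∈ I, satisfying θ″ = sin θ (h − Ω + (q² − μ) cos θ) and q′ = αΩ − β − 2 (cos θ / sin θ) θ′ q. Then (q sin²θ)′(ξ) = (αΩ − β) sin²θ(ξ) ≠ 0 for every ξ ∈ I, so ξ ↦ q(ξ) sin²θ(ξ) is strictly monotone. Consequently, for Ω ≠ β/α this system has no constant solutions with sin θ ≠ 0, and no nonconstant periodic solutions with sin θ nowhere zero; i.e., there are no stationary coherent structure profiles of wavetrain, periodic, homoclinic or heteroclinic type when Ω ≠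 β/α. -/
/-!
The product rule applied to `F = q sin²θ` makes the term `2 (cos θ / sin θ) θ' q` of the equation
for `q` cancel against `2 q sin θ cos θ θ'`, leaving `F' = (αΩ - β) sin²θ`. This has the constant
sign of `αΩ - β ≠ 0`, so `F` is strictly monotone, hence injective, on the interval `I`. A constant
or `T`-periodic pair `(θ, q)` would force `F` to take the same value at two distinct points.
-/

theorem stmt15 (α β h μ Ω : ℝ) (hα : 0 < α) (hΩ : Ω ≠ β / α)
    (I : Set ℝ) (hI : IsOpen I) (hconn : IsPreconnected I)
    (θ p q : ℝ → ℝ)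
    (hsin : ∀ ξ ∈ I, Real.sin (θ ξ) ≠ 0)
    (hθ : ∀ ξ ∈ I, HasDerivAt θ (p ξ) ξ)
    (hp : ∀ ξ ∈ I, HasDerivAt p
        (Real.sin (θ ξ) * (h - Ω + ((q ξ) ^ 2 - μ) * Real.cos (θ ξ))) ξ)
    (hq : ∀ ξ ∈ I, HasDerivAt q
        ((α * Ω - β) - 2 * (Real.cos (θ ξ) / Real.sin (θ ξ)) * p ξ * q ξ) ξ) :
    -- the derivative of `q sin²θ` is `(αΩ − β) sin²θ ≠ 0`
    (∀ ξ ∈ I, HasDerivAt (fun x => q x * (Real.sin (θ x)) ^ 2)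
        ((α * Ω - β) * (Real.sin (θ ξ)) ^ 2) ξ ∧
        (α * Ω - β) * (Real.sin (θ ξ)) ^ 2 ≠ 0) ∧
    -- hence `q sin²θ` is strictly monotone on `I`
    (StrictMonoOn (fun x => q x * (Real.sin (θ x)) ^ 2) I ∨
      StrictAntiOn (fun x => q x * (Real.sin (θ x)) ^ 2) I) ∧
    -- no constant solutions (wavetrains)
    (¬ (I.Nontrivial ∧ ∃ a b : ℝ, ∀ ξ ∈ I, θ ξ = a ∧ q ξ = b)) ∧
    -- no periodic solutions (in particular no periodic, homoclinic or heteroclinic profiles)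
    (∀ T : ℝ, 0 < T → (∀ ξ ∈ I, ξ + T ∈ I) →
      (∀ ξ ∈ I, θ (ξ + T) = θ ξ ∧ q (ξ + T) = q ξ) → I = ∅) := by
  have hc : α * Ω - β ≠ 0 := by
    intro h0
    apply hΩ
    rw [eq_div_iff hα.ne']
    linarith
  have hF : ∀ ξ ∈ I, HasDerivAt (fun x => q x * (Real.sin (θ x)) ^ 2)
      ((α * Ω - β) * (Real.sin (θ ξ)) ^ 2) ξ := by
    intro ξ hξ
    have hs := hsin ξ hξ
    refine ((hq ξ hξ).mul ((hθ ξ hξ).sin.pow 2)).congr_deriv ?_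
    simp only [Pi.pow_apply]
    field_simp
    ring
  have hconv : Convex ℝ I := hconn.ordConnected.convex
  have hcont : ContinuousOn (fun x => q x * (Real.sin (θ x)) ^ 2) I :=
    fun ξ hξ => (hF ξ hξ).continuousAt.continuousWithinAt
  have hsq : ∀ ξ ∈ I, 0 < (Real.sin (θ ξ)) ^ 2 := by
    intro ξ hξ
    have hs := hsin ξ hξ
    positivity
  have hmono : StrictMonoOn (fun x => q x * (Real.sin (θ x)) ^ 2) I ∨
      StrictAntiOn (fun x => q x * (Real.sin (θ x)) ^ 2) I := by
    rcases lt_or_gt_of_ne hc with hneg | hpos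
    · right
      refine strictAntiOn_of_deriv_neg hconv hcont fun ξ hξ => ?_
      have hξ' := interior_subset hξ
      rw [(hF ξ hξ').deriv]
      exact mul_neg_of_neg_of_pos hneg (hsq ξ hξ')
    · left
      refine strictMonoOn_of_deriv_pos hconv hcont fun ξ hξ => ?_
      have hξ' := interior_subset hξ
      rw [(hF ξ hξ').deriv]
      exact mul_pos hpos (hsq ξ hξ')
  have hinj : Set.InjOn (fun x => q x * (Real.sin (θ x)) ^ 2) I :=
    hmono.elim StrictMonoOn.injOn StrictAntiOn.injOn
  refine ⟨fun ξ hξ => ⟨hF ξ hξ, mul_ne_zero hc (hsq ξ hξ).ne'⟩, hmono, ?_, ?_⟩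
  · rintro ⟨⟨x, hx, y, hy, hxy⟩, a, b, hab⟩
    refine hxy (hinj hx hy ?_)
    simp only [(hab x hx).1, (hab x hx).2, (hab y hy).1, (hab y hy).2]
  · intro T hT hIT hper
    refine Set.eq_empty_of_forall_notMem fun ξ hξ => ?_
    have heq : ξ + T = ξ := hinj (hIT ξ hξ) hξ (by
      simp only [(hper ξ hξ).1, (hper ξ hξ).2])
    linarith
end

section
/- Let α > 0, s ≠ 0 and β, h, μ, Ω ∈ ℝ. A constant triple (θ₀, p₀, q₀) with sin θ₀ ≠ 0 is an equilibrium of the coherent structure system (CS) if and only if p₀ = 0, q₀ = (Ω − β/α)/s, and (μ − q₀²) cos θ₀ = h − β/α. In particular, for s ≠ 0 the only wavetrains that occur as equilibria of (CS) are those with the selected wavenumber q₀ = (Ω − β/α)/s. -/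
/-!
At `p₀ = 0` the third equation reduces to `α (Ω - s q₀) = β`, that is `Ω - s q₀ = β / α`, which
determines `q₀` because `s ≠ 0`. The second equation is `sin θ₀` times a factor, so as
`sin θ₀ ≠ 0` that factor vanishes; substituting `Ω - s q₀ = β / α` gives the relation for `cos θ₀`.
-/

theorem stmt17 (α β h μ Ω s θ₀ p₀ q₀ : ℝ) (hα : 0 < α) (hs : s ≠ 0)
    (hθ : Real.sin θ₀ ≠ 0) :
    -- `(θ₀, p₀, q₀)` is an equilibrium of the coherent structure system (CS) ...
    (p₀ = 0 ∧
     Real.sin θ₀ * (h + (q₀ ^ 2 - μ) * Real.cos θ₀ - (Ω - s * q₀)) + α * s * p₀ = 0 ∧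
     α * (Ω - s * q₀) - β + ((s - 2 * q₀ * Real.cos θ₀) / Real.sin θ₀) * p₀ = 0)
    ↔
    -- ... iff it is a wavetrain with the selected wavenumber `q₀ = (Ω − β/α)/s`
    (p₀ = 0 ∧ q₀ = (Ω - β / α) / s ∧ (μ - q₀ ^ 2) * Real.cos θ₀ = h - β / α) := by
  have hα' : α ≠ 0 := hα.ne'
  constructor
  · rintro ⟨rfl, h2, h3⟩
    -- The third equation gives the rotation frequency in the comoving frame.
    have hfreq : Ω - s * q₀ = β / α := by
      rw [eq_div_iff hα']
      linarith
    have hprod : Real.sin θ₀ * (h + (q₀ ^ 2 - μ) * Real.cos θ₀ - (Ω - s * q₀)) = 0 := by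
      linarith
    have hfac := (mul_eq_zero.mp hprod).resolve_left hθ
    refine ⟨rfl, ?_, ?_⟩
    · rw [eq_div_iff hs]
      linarith
    · linarith
  · rintro ⟨rfl, h2, h3⟩
    have hfreq : Ω - s * q₀ = β / α := by
      rw [eq_div_iff hs] at h2
      linarith
    refine ⟨rfl, ?_, ?_⟩
    · have hfac : h + (q₀ ^ 2 - μ) * Real.cos θ₀ - (Ω - s * q₀) = 0 := by
        linarith
      rw [hfac]
      ring
    · rw [hfreq, mul_div_cancel₀ β hα']
      ring
end

section
/- Let α > 0, s, q, β, h, μ, Ω ∈ ℝ and θ₀ ∈ {0, π}. The Jacobian matrix of the vector field of the desingularized coherent-structure system (dCS) at the point (θ₀, 0, q) equals the 3×3 matrix with rows (0, 0, 0) in the first column and first row except the stated entries, namely: row 1 = (0, 0, 0), row 2 = (0, α s, 2q cos θ₀ + s), row 3 = (0, s − 2q cos θ₀, −α s). Consequently (1, 0, 0) spans an eigenspace for the eigenvalue 0, and if (1 + α²) s² > 4 q², the remaining eigenvalues are the two simple real numbers ±√((1 + α²) s² − 4 q²), one positive and one negative; in particular the Jacobian always has a nontrivial kernel and, under this speed condition,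 exactly one eigenvalue on the imaginary axis. -/
/-!
At `(θ₀, 0, q)` with `sin θ₀ = 0`, every `θ`-derivative carries a factor `sin θ₀` or `p̃ = 0`, and both
factors of the first component vanish; this gives the zero first column and row of `Jmat`. Since
`cos² θ₀ = 1`, the remaining trace-free `2 × 2` block has determinant `-((1 + α²) s² - 4 q²)`. Under
the speed condition it is therefore invertible, so the kernel is spanned by `(1, 0, 0)`, and its
eigenvalues are the two square roots of `(1 + α²) s² - 4 q²`.
-/

/-- The vector field of the desingularized coherent-structure system (dCS), as a map on
`Fin 3 → ℝ` with coordinates `(θ, p̃, q)`. -/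
noncomputable def dCS3 (α β h μ Ω s : ℝ) (v : Fin 3 → ℝ) : Fin 3 → ℝ :=
  ![Real.sin (v 0) * v 1,
    h + ((v 2) ^ 2 - μ) * Real.cos (v 0) - (Ω - s * v 2) + α * s * v 1
      - Real.cos (v 0) * (v 1) ^ 2,
    α * (Ω - s * v 2) - β + (s - 2 * (v 2) * Real.cos (v 0)) * v 1]

/-- The claimed Jacobian matrix of (dCS) at a point `(θ₀, 0, q)` with `θ₀ ∈ {0, π}`. -/
noncomputable def Jmat (α s q θ₀ : ℝ) : Matrix (Fin 3) (Fin 3) ℝ :=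
  !![0, 0, 0;
     0, α * s, 2 * q * Real.cos θ₀ + s;
     0, s - 2 * q * Real.cos θ₀, -(α * s)]

theorem stmt18 (α β h μ Ω s q θ₀ : ℝ) (hα : 0 < α) (hθ : θ₀ = 0 ∨ θ₀ = Real.pi) :
    -- the Jacobian of the vector field at `(θ₀, 0, q)` is `Jmat`
    HasFDerivAt (dCS3 α β h μ Ω s)
      (LinearMap.toContinuousLinearMap (Matrix.toLin' (Jmat α s q θ₀))) ![θ₀, 0, q] ∧
    -- `(1,0,0)` is in the kernel (eigenvalue 0)
    Matrix.mulVec (Jmat α s q θ₀) ![1, 0, 0] = 0 ∧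
    (4 * q ^ 2 < (1 + α ^ 2) * s ^ 2 →
      -- `(1,0,0)` spans the eigenspace of the eigenvalue 0
      (∀ v : Fin 3 → ℝ, Matrix.mulVec (Jmat α s q θ₀) v = 0 →
          ∃ c : ℝ, v = c • ![1, 0, 0]) ∧
      -- the remaining eigenvalues are the simple real pair `±√((1+α²)s² − 4q²)`
      0 < Real.sqrt ((1 + α ^ 2) * s ^ 2 - 4 * q ^ 2) ∧
      Matrix.charpoly (Jmat α s q θ₀) =
        Polynomial.X *
          (Polynomial.X - Polynomial.C (Real.sqrt ((1 + α ^ 2) * s ^ 2 - 4 * q ^ 2))) *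
          (Polynomial.X + Polynomial.C (Real.sqrt ((1 + α ^ 2) * s ^ 2 - 4 * q ^ 2)))) := by
  have hsin : Real.sin θ₀ = 0 := by rcases hθ with rfl | rfl <;> simp
  have hcos : Real.cos θ₀ ^ 2 = 1 := by rcases hθ with rfl | rfl <;> simp
  refine ⟨?_, ?_, ?_⟩
  · rw [hasFDerivAt_pi']
    have hx (j : Fin 3) : HasFDerivAt (fun v : Fin 3 → ℝ => v j)
        (ContinuousLinearMap.proj (R := ℝ) (φ := fun _ : Fin 3 => ℝ) j) ![θ₀, 0, q] :=
      hasFDerivAt_apply j _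
    have h0 := hx 0
    have h1 := hx 1
    have h2 := hx 2
    intro i
    fin_cases i
    · refine (h0.sin.mul h1).congr_fderiv ?_
      ext v
      simp [Jmat, Matrix.mulVec, dotProduct, Fin.sum_univ_three, hsin]
    · refine ((((((h2.pow 2).sub_const μ).mul h0.cos).const_add h).sub
        ((h2.const_mul s).const_sub Ω)).add (h1.const_mul (α * s))).sub
        (h0.cos.mul (h1.pow 2)) |>.congr_fderiv ?_
      ext v
      simp [Jmat, Matrix.mulVec, dotProduct, Fin.sum_univ_three, hsin]
      ring
    · refine ((((h2.const_mul s).const_sub Ω).const_mul α).sub_const β).add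
        ((((h2.const_mul 2).mul h0.cos).const_sub s).mul h1) |>.congr_fderiv ?_
      ext v
      simp [Jmat, Matrix.mulVec, dotProduct, Fin.sum_univ_three, hsin]
      ring
  · ext i
    fin_cases i <;> simp [Jmat, Matrix.mulVec, dotProduct, Fin.sum_univ_three]
  · intro hlt
    have hD : 0 < (1 + α ^ 2) * s ^ 2 - 4 * q ^ 2 := by linarith
    refine ⟨?_, Real.sqrt_pos.mpr hD, ?_⟩
    · intro v hv
      have e1 := congrFun hv 1
      have e2 := congrFun hv 2
      simp [Jmat, Matrix.mulVec, dotProduct, Fin.sum_univ_three] at e1 e2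
      -- Cramer rule: the determinant of the block annihilates both remaining coordinates.
      have k1 : ((1 + α ^ 2) * s ^ 2 - 4 * q ^ 2) * v 1 = 0 := by
        linear_combination α * s * e1 + (2 * q * Real.cos θ₀ + s) * e2 + 4 * q ^ 2 * v 1 * hcos
      have k2 : ((1 + α ^ 2) * s ^ 2 - 4 * q ^ 2) * v 2 = 0 := by
        linear_combination (s - 2 * q * Real.cos θ₀) * e1 - α * s * e2 + 4 * q ^ 2 * v 2 * hcos
      have v1 : v 1 = 0 := (mul_eq_zero.mp k1).resolve_left hD.ne'
      have v2 : v 2 = 0 := (mul_eq_zero.mp k2).resolve_left hD.ne'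
      refine ⟨v 0, ?_⟩
      ext i
      fin_cases i <;> simp [v1, v2]
    · have hr := Real.sq_sqrt hD.le
      set r := Real.sqrt ((1 + α ^ 2) * s ^ 2 - 4 * q ^ 2)
      have hblock : r ^ 2 = α * s * (α * s)
          + (2 * q * Real.cos θ₀ + s) * (s - 2 * q * Real.cos θ₀) := by
        linear_combination hr + 4 * q ^ 2 * hcos
      have hC := congrArg (Polynomial.C (R := ℝ)) hblock
      simp only [map_pow, map_add, map_mul] at hC
      rw [Matrix.charpoly, Matrix.det_fin_three]
      simp [Matrix.charmatrix_apply, Jmat] at hC ⊢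
      linear_combination Polynomial.X * hC
end
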